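/- arXiv:2102.11226 — 2 statements merged into one kernel-verified Lean document; each statement's English description precedes it below -/
import Mathlib

section
/- Let X, Y be two-dimensional normed spaces and τ : S_X → S_Y a surjective isometry. If the norm of X is piecewise C¹ on S_X, then so is the norm of Y, and the norm of X is differentiable at x ∈ S_X if and only if the norm of Y is differentiable at τ(x). -/
/-! # Differentiability points of the norm under isometries of planar unit spheres

Differentiability of a norm at a unit vector `u` is expressed in terms of `‖y - u‖`, `‖z - u‖` and
`‖y + z‖` for unit vectors `y`, `z` near `u`. A surjective isometry `τ` between the unit spheres of
a plane and another normed space preserves `‖y + z‖`: the map `x ↦ -τ⁻¹ (-τ x)` is an isometry of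
the unit sphere at which `sphere_map_eq_self` applies.
-/

section Differentiability

variable {E : Type*} [NormedAddCommGroup E] [NormedSpace ℝ E]

/-- Sums of two unit vectors near `u` have norm `2` up to first order. -/
def AlmostAdditiveAt (u : E) : Prop :=
  ∀ ε > 0, ∃ δ > 0, ∀ y z : E, ‖y‖ = 1 → ‖z‖ = 1 → ‖y - u‖ < δ → ‖z - u‖ < δ →
    2 - ‖y + z‖ ≤ ε * (‖y - u‖ + ‖z - u‖)

lemma exists_dual_eq_norm {u : E} (hu : ‖u‖ = 1) :
    ∃ f : E →L[ℝ] ℝ, (∀ z, f z ≤ ‖z‖) ∧ f u = 1 := by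
  obtain ⟨f, hf, hfu⟩ := exists_dual_vector ℝ u (by simp [hu])
  refine ⟨f, fun z ↦ ?_, by simpa [hu] using hfu⟩
  simpa [hf] using (le_abs_self _).trans (f.le_opNorm z)

lemma DifferentiableAt.almostAdditiveAt {u : E} (hu : ‖u‖ = 1)
    (h : DifferentiableAt ℝ (fun z : E ↦ ‖z‖) u) : AlmostAdditiveAt u := by
  intro ε hε
  set f := fderiv ℝ (fun z : E ↦ ‖z‖) u with hf
  have hfu : f u = 1 := by rw [hf, fderiv_norm_self h, hu]
  have hle (z : E) : f z ≤ ‖z‖ := by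
    have hn : ‖f‖ ≤ 1 := by
      simpa using norm_fderiv_le_of_lipschitz ℝ (lipschitzWith_one_norm (E := E)) (x₀ := u)
    calc f z ≤ ‖f z‖ := le_abs_self _
      _ ≤ ‖f‖ * ‖z‖ := f.le_opNorm z
      _ ≤ ‖z‖ := mul_le_of_le_one_left (norm_nonneg z) hn
  obtain ⟨δ, hδ, hb⟩ := Metric.eventually_nhds_iff.1 (h.hasFDerivAt.isLittleO.def hε)
  have key (y : E) (hy : ‖y‖ = 1) (hyu : ‖y - u‖ < δ) : 1 - f y ≤ ε * ‖y - u‖ := by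
    have := hb (y := y) (by rwa [dist_eq_norm])
    rw [← hf, hy, hu, map_sub, hfu, Real.norm_eq_abs] at this
    linarith [le_abs_self (1 - 1 - (f y - 1))]
  refine ⟨δ, hδ, fun y z hy hz hyu hzu ↦ ?_⟩
  have h1 := hle (y + z)
  rw [map_add] at h1
  linarith [key y hy hyu, key z hz hzu]

lemma norm_normalize_sub_le {u v : E} (hu : ‖u‖ = 1) (h : 0 < ‖u + v‖) :
    ‖‖u + v‖⁻¹ • (u + v) - u‖ ≤ 2 * ‖v‖ := by
  have h1 : ‖‖u + v‖⁻¹ • (u + v) - (u + v)‖ = |1 - ‖u + v‖| := by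
    have : ‖u + v‖⁻¹ • (u + v) - (u + v) = ((1 - ‖u + v‖) * ‖u + v‖⁻¹) • (u + v) := by
      rw [sub_mul, mul_inv_cancel₀ h.ne', one_mul, sub_smul, one_smul]
    rw [this, norm_smul, norm_mul, norm_inv, norm_norm, mul_assoc, inv_mul_cancel₀ h.ne', mul_one,
      Real.norm_eq_abs]
  have h2 : |1 - ‖u + v‖| ≤ ‖v‖ := by
    have := abs_norm_sub_norm_le u (u + v)
    rwa [hu, sub_add_cancel_left, norm_neg] at this
  calc ‖‖u + v‖⁻¹ • (u + v) - u‖ = ‖(‖u + v‖⁻¹ • (u + v) - (u + v)) + v‖ := by congr 1; abel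
    _ ≤ _ := norm_add_le _ _
    _ ≤ 2 * ‖v‖ := by linarith

lemma add_le_norm_smul_add_smul {y z : E} (hy : ‖y‖ = 1) (hz : ‖z‖ = 1) {a b c : ℝ} (ha : 0 ≤ a)
    (hb : 0 ≤ b) (hac : a ≤ c) (hbc : b ≤ c) :
    a + b - c * (2 - ‖y + z‖) ≤ ‖a • y + b • z‖ := by
  have hyz : ‖y + z‖ ≤ 2 := (norm_add_le y z).trans (by linarith)
  wlog hab : a ≤ b generalizing a b y z
  · have := this hz hy hb ha hbc hac (by rwa [add_comm]) (le_of_not_ge hab)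
    rwa [add_comm b a, add_comm z y, add_comm (b • z)] at this
  have h1 : b • (y + z) = (a • y + b • z) + (b - a) • y := by module
  have h2 : b * ‖y + z‖ ≤ ‖a • y + b • z‖ + (b - a) := by
    calc b * ‖y + z‖ = ‖b • (y + z)‖ := by rw [norm_smul, Real.norm_of_nonneg hb]
      _ ≤ ‖a • y + b • z‖ + ‖(b - a) • y‖ := h1 ▸ norm_add_le _ _
      _ = _ := by rw [norm_smul, hy, mul_one, Real.norm_of_nonneg (sub_nonneg.2 hab)]
  nlinarith

lemma AlmostAdditiveAt.differentiableAt {u : E} (hu : ‖u‖ = 1) (h : AlmostAdditiveAt u) :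
    DifferentiableAt ℝ (fun z : E ↦ ‖z‖) u := by
  obtain ⟨f, hf, hfu⟩ := exists_dual_eq_norm hu
  refine (HasFDerivAt.of_isLittleO (f' := f) ?_).differentiableAt
  refine Asymptotics.isLittleO_iff.2 fun ε hε ↦ ?_
  obtain ⟨δ, hδ, hb⟩ := h (ε / 8) (by positivity)
  refine Metric.eventually_nhds_iff.2 ⟨min (1 / 2) (δ / 2), by positivity, fun w hw ↦ ?_⟩
  obtain ⟨v, rfl⟩ : ∃ v, w = u + v := ⟨w - u, by abel⟩
  rw [dist_eq_norm, add_sub_cancel_left, lt_min_iff] at hw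
  rw [add_sub_cancel_left]
  have hbound (v : E) (hv : ‖v‖ < 1 / 2) : 0 < ‖u + v‖ ∧ ‖u + v‖ ≤ 2 := by
    have h1 := norm_add_le u v
    have h2 := norm_sub_le (u + v) v
    rw [add_sub_cancel_right] at h2
    constructor <;> linarith
  obtain ⟨hα, hα2⟩ := hbound v hw.1
  obtain ⟨hβ, hβ2⟩ := hbound (-v) (by simpa using hw.1)
  have hyu := norm_normalize_sub_le hu hα
  have hzu := norm_normalize_sub_le hu hβ
  rw [norm_neg] at hzu
  set α := ‖u + v‖ with hαdef
  set β := ‖u + -v‖ with hβdef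
  have hy : ‖α⁻¹ • (u + v)‖ = 1 := by
    rw [norm_smul, norm_inv, norm_norm, inv_mul_cancel₀ hα.ne']
  have hz : ‖β⁻¹ • (u + -v)‖ = 1 := by
    rw [norm_smul, norm_inv, norm_norm, inv_mul_cancel₀ hβ.ne']
  have h1 := hb _ _ hy hz (by linarith) (by linarith)
  have h2 := add_le_norm_smul_add_smul hy hz hα.le hβ.le hα2 hβ2
  have h3 : ‖α • α⁻¹ • (u + v) + β • β⁻¹ • (u + -v)‖ = 2 := by
    rw [smul_inv_smul₀ hα.ne', smul_inv_smul₀ hβ.ne', show u + v + (u + -v) = (2 : ℝ) • u by module,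
      norm_smul, hu]
    norm_num
  have h4 := hf (u + v)
  have h5 := hf (u + -v)
  rw [map_add, hfu] at h4 h5
  rw [map_neg] at h5
  rw [hu, Real.norm_eq_abs, abs_of_nonneg (by linarith)]
  nlinarith [norm_nonneg v]

lemma differentiableAt_norm_iff_almostAdditiveAt {u : E} (hu : ‖u‖ = 1) :
    DifferentiableAt ℝ (fun z : E ↦ ‖z‖) u ↔ AlmostAdditiveAt u :=
  ⟨DifferentiableAt.almostAdditiveAt hu, AlmostAdditiveAt.differentiableAt hu⟩

end Differentiability

section Plane

variable {E : Type*} [NormedAddCommGroup E] [NormedSpace ℝ E]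

lemma exists_dual_eq_one_of_norm_add {a b : E} (ha : ‖a‖ = 1) (hb : ‖b‖ = 1)
    (hab : ‖a + b‖ = 2) : ∃ f : E →L[ℝ] ℝ, (∀ z, f z ≤ ‖z‖) ∧ f a = 1 ∧ f b = 1 := by
  obtain ⟨f, hf, hfu⟩ := exists_dual_eq_norm (u := (2⁻¹ : ℝ) • (a + b))
    (by rw [norm_smul, hab]; norm_num)
  have h1 := hf a
  have h2 := hf b
  rw [map_smul, map_add, smul_eq_mul] at hfu
  refine ⟨f, hf, ?_, ?_⟩ <;> linarith

lemma norm_smul_add_smul_of_norm_add {a b : E} (ha : ‖a‖ = 1) (hb : ‖b‖ = 1)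
    (hab : ‖a + b‖ = 2) {s t : ℝ} (hs : 0 ≤ s) (ht : 0 ≤ t) : ‖s • a + t • b‖ = s + t := by
  obtain ⟨f, hf, hfa, hfb⟩ := exists_dual_eq_one_of_norm_add ha hb hab
  refine le_antisymm ?_ ?_
  · refine (norm_add_le _ _).trans_eq ?_
    rw [norm_smul, norm_smul, ha, hb, Real.norm_of_nonneg hs, Real.norm_of_nonneg ht]
    ring
  · simpa [hfa, hfb] using hf (s • a + t • b)

lemma linearIndependent_of_norm_add {a b : E} (ha : ‖a‖ = 1) (hb : ‖b‖ = 1)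
    (hab : ‖a + b‖ = 2) (hne : a ≠ b) : LinearIndependent ℝ ![a, b] := by
  obtain ⟨f, hf, hfa, hfb⟩ := exists_dual_eq_one_of_norm_add ha hb hab
  refine LinearIndependent.pair_iff.2 fun s t hst ↦ ?_
  have h1 : s + t = 0 := by simpa [hfa, hfb] using congrArg f hst
  obtain rfl : s = -t := by linarith
  have h2 : t • (b - a) = 0 := by rw [← hst]; module
  have h3 : t = 0 := (smul_eq_zero.1 h2).resolve_right (sub_ne_zero.2 hne.symm)
  simp [h3]

/-- Coordinates in the plane with respect to two independent vectors. -/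
lemma exists_coordinates (hdim : Module.finrank ℝ E = 2) {a b : E}
    (h : LinearIndependent ℝ ![a, b]) :
    ∃ p q : E →ₗ[ℝ] ℝ, (∀ z, z = p z • a + q z • b) ∧ p a = 1 ∧ q a = 0 ∧ p b = 0 ∧ q b = 1 := by
  let B := basisOfLinearIndependentOfCardEqFinrank h (by simp [hdim])
  have h0 : B 0 = a := by simp [B]
  have h1 : B 1 = b := by simp [B]
  refine ⟨B.coord 0, B.coord 1, fun z ↦ ?_, ?_, ?_, ?_, ?_⟩
  · have := B.sum_repr z
    rw [Fin.sum_univ_two, h0, h1] at this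
    exact this.symm
  all_goals simp [← h0, ← h1]

/-- Three unit vectors of a plane any two of which span a segment in the sphere are collinear. -/
lemma exists_eq_add_smul_sub (hdim : Module.finrank ℝ E = 2) {a b c : E} (ha : ‖a‖ = 1)
    (hb : ‖b‖ = 1) (hc : ‖c‖ = 1) (hab : ‖a + b‖ = 2) (hac : ‖c + a‖ = 2) (hbc : ‖c + b‖ = 2)
    (hne : a ≠ b) : ∃ s : ℝ, c = a + s • (b - a) := by
  obtain ⟨p, q, hpq, -⟩ := exists_coordinates hdim (linearIndependent_of_norm_add ha hb hab hne)
  specialize hpq c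
  generalize p c = s at hpq
  generalize q c = t at hpq
  suffices s + t = 1 by
    obtain rfl : s = 1 - t := by linarith
    exact ⟨t, by rw [hpq]; module⟩
  rcases le_or_gt 0 s with hs | hs <;> rcases le_or_gt 0 t with ht | ht
  · rw [← norm_smul_add_smul_of_norm_add ha hb hab hs ht, ← hpq, hc]
  · have h := norm_smul_add_smul_of_norm_add hc hb hbc zero_le_one (neg_nonneg.2 ht.le)
    rw [show (1 : ℝ) • c + (-t) • b = s • a by rw [hpq]; module, norm_smul, ha,
      Real.norm_of_nonneg hs] at h
    linarith
  · have h := norm_smul_add_smul_of_norm_add hc ha hac zero_le_one (neg_nonneg.2 hs.le)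
    rw [show (1 : ℝ) • c + (-s) • a = t • b by rw [hpq]; module, norm_smul, hb,
      Real.norm_of_nonneg ht] at h
    linarith
  · have h := norm_smul_add_smul_of_norm_add ha hb hab (neg_nonneg.2 hs.le) (neg_nonneg.2 ht.le)
    rw [show (-s) • a + (-t) • b = -c by rw [hpq]; module, norm_neg, hc] at h
    have hd : ‖a - b‖ ≤ 2 := (norm_sub_le a b).trans (by linarith)
    obtain rfl : t = -1 - s := by linarith
    have h1 : c + a = (1 + s) • (a - b) := by rw [hpq]; module
    rw [h1, norm_smul, Real.norm_of_nonneg (by linarith)] at hac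
    nlinarith

/-- In a plane, the sphere near the midpoint of a segment it contains consists of points of the
line carrying the segment. -/
lemma exists_eq_of_norm_add_eq_two (hdim : Module.finrank ℝ E = 2) {a b : E}
    (ha : ‖a‖ = 1) (hb : ‖b‖ = 1) (hab : ‖a + b‖ = 2) (hne : a ≠ b) :
    ∃ U ∈ nhds (a + b), ∀ y z : E, ‖y‖ = 1 → ‖z‖ = 1 → ‖y + z‖ = 2 → y + z ∈ U →
      ∃ s t : ℝ, y = a + s • (b - a) ∧ z = a + t • (b - a) := by
  have : FiniteDimensional ℝ E := .of_finrank_eq_succ hdim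
  obtain ⟨p, q, hpq, hpa, hqa, hpb, hqb⟩ :=
    exists_coordinates hdim (linearIndependent_of_norm_add ha hb hab hne)
  obtain ⟨f, hf, hfa, hfb⟩ := exists_dual_eq_one_of_norm_add ha hb hab
  refine ⟨{w | 0 < p w ∧ 0 < q w}, IsOpen.mem_nhds ?_ ?_, fun y z hy hz hyz hU ↦ ?_⟩
  · exact (isOpen_lt continuous_const p.continuous_of_finiteDimensional).inter
      (isOpen_lt continuous_const q.continuous_of_finiteDimensional)
  · simp [hpa, hqa, hpb, hqb]
  · have hfpq (w : E) : f w = p w + q w := by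
      conv_lhs => rw [hpq w]
      simp [hfa, hfb]
    have h1 := norm_smul_add_smul_of_norm_add ha hb hab hU.1.le hU.2.le
    rw [← hpq, hyz, ← hfpq, map_add] at h1
    have h2 := hf y
    have h3 := hf z
    have hline (w : E) (hw : f w = 1) : w = a + q w • (b - a) := by
      rw [hfpq] at hw
      conv_lhs => rw [hpq w, show p w = 1 - q w by linarith]
      module
    exact ⟨q y, q z, hline y (by linarith), hline z (by linarith)⟩

/-- An isometry of the unit sphere of a plane cannot interchange the endpoints of a segment in
the sphere if it keeps every point adjacent to its image. -/
lemma eq_of_interchange (hdim : Module.finrank ℝ E = 2) {σ : E → E}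
    (h1 : ∀ x, ‖x‖ = 1 → ‖σ x‖ = 1)
    (h2 : ∀ x y, ‖x‖ = 1 → ‖y‖ = 1 → ‖σ x - σ y‖ = ‖x - y‖)
    (h3 : ∀ x, ‖x‖ = 1 → ‖x + σ x‖ = 2) {a b : E} (ha : ‖a‖ = 1) (hb : ‖b‖ = 1)
    (hσa : σ a = b) (hσb : σ b = a) : a = b := by
  by_contra hne
  have hab : ‖a + b‖ = 2 := hσa ▸ h3 a ha
  obtain ⟨f, hf, hfa, hfb⟩ := exists_dual_eq_one_of_norm_add ha hb hab
  obtain ⟨U, hU, hline⟩ := exists_eq_of_norm_add_eq_two hdim ha hb hab hne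
  have hrank : 1 < Module.rank ℝ E :=
    Module.one_lt_rank_of_one_lt_finrank (by omega)
  have : PreconnectedSpace (Metric.sphere (0 : E) 1) :=
    isPreconnected_iff_preconnectedSpace.1 (isPreconnected_sphere hrank 0 1)
  have hnorm (y : Metric.sphere (0 : E) 1) : ‖(y : E)‖ = 1 := by simp
  have hcont : Continuous fun y : Metric.sphere (0 : E) 1 ↦ (y : E) + σ y := by
    refine continuous_subtype_val.add (Isometry.continuous (Isometry.of_dist_eq fun y z ↦ ?_))
    rw [dist_eq_norm, h2 _ _ (hnorm y) (hnorm z), Subtype.dist_eq, dist_eq_norm]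
  have hclopen : IsClopen {y : Metric.sphere (0 : E) 1 | (y : E) + σ y = a + b} := by
    refine ⟨isClosed_eq hcont continuous_const, isOpen_iff_mem_nhds.2 fun y hy ↦ ?_⟩
    filter_upwards [hcont.continuousAt.preimage_mem_nhds (t := U)
      (by rwa [show (y : E) + σ y = a + b from hy])] with z hz
    obtain ⟨s, t, hs, ht⟩ := hline z (σ z) (hnorm z) (h1 _ (hnorm z)) (h3 _ (hnorm z)) hz
    have hd : 0 < ‖b - a‖ := norm_pos_iff.2 (sub_ne_zero.2 (Ne.symm hne))
    have e1 : |t - 1| = |s| := by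
      have := h2 z a (hnorm z) ha
      rw [hσa, ht, hs, show a + t • (b - a) - b = (t - 1) • (b - a) by module, add_sub_cancel_left,
        norm_smul, norm_smul] at this
      exact mul_right_cancel₀ hd.ne' this
    have e2 : |t| = |s - 1| := by
      have := h2 z b (hnorm z) hb
      rw [hσb, ht, hs, show a + s • (b - a) - b = (s - 1) • (b - a) by module, add_sub_cancel_left,
        norm_smul, norm_smul] at this
      exact mul_right_cancel₀ hd.ne' this
    have e3 := sq_eq_sq_iff_abs_eq_abs (t - 1) s |>.2 e1
    have e4 := sq_eq_sq_iff_abs_eq_abs t (s - 1) |>.2 e2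
    obtain rfl : t = 1 - s := by linarith
    change (z : E) + σ z = a + b
    rw [ht, hs]
    module
  have huniv := hclopen.eq_univ ⟨⟨a, by simpa using ha⟩, by simp [hσa]⟩
  have hna : ‖-a‖ = 1 := by rwa [norm_neg]
  have hmem : -a + σ (-a) = a + b :=
    Set.eq_univ_iff_forall.1 huniv ⟨-a, by simpa using ha⟩
  have h5 := congrArg f hmem
  have h6 := hf (σ (-a))
  rw [h1 _ hna] at h6
  rw [map_add, map_add, map_neg, hfa, hfb] at h5
  linarith

/-- An isometry `σ` of the unit sphere of a plane with `‖x + σ x‖ = 2` and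
`‖σ x + y‖ = ‖x + σ y‖` is the identity. -/
lemma sphere_map_eq_self (hdim : Module.finrank ℝ E = 2) {σ : E → E}
    (h1 : ∀ x, ‖x‖ = 1 → ‖σ x‖ = 1)
    (h2 : ∀ x y, ‖x‖ = 1 → ‖y‖ = 1 → ‖σ x - σ y‖ = ‖x - y‖)
    (h3 : ∀ x, ‖x‖ = 1 → ‖x + σ x‖ = 2)
    (h4 : ∀ x y, ‖x‖ = 1 → ‖y‖ = 1 → ‖σ x + y‖ = ‖x + σ y‖) {x : E} (hx : ‖x‖ = 1) :
    σ x = x := by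
  by_contra hne
  have hstep (y : E) (hy : ‖y‖ = 1) (hyne : σ y ≠ y) : σ (σ y) - σ y = σ y - y := by
    have hy1 := h1 y hy
    have hy2 := h1 _ hy1
    have hy20 : ‖σ (σ y) + y‖ = 2 := by
      rw [h4 _ _ hy1 hy, ← two_smul ℝ, norm_smul, hy1]
      norm_num
    obtain ⟨s, hs⟩ := exists_eq_add_smul_sub hdim hy hy1 hy2 (h3 y hy) hy20
      (by rw [add_comm, h3 _ hy1]) hyne.symm
    have hd : 0 < ‖σ y - y‖ := norm_pos_iff.2 (sub_ne_zero.2 hyne)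
    have hs1 : |s - 1| = 1 := by
      have := h2 (σ y) y hy1 hy
      rw [hs, show y + s • (σ y - y) - σ y = (s - 1) • (σ y - y) by module, norm_smul] at this
      exact mul_right_cancel₀ hd.ne' (this.trans (one_mul _).symm)
    rcases eq_or_eq_neg_of_abs_eq hs1 with h | h
    · obtain rfl : s = 2 := by linarith
      rw [hs]
      module
    · obtain rfl : s = 0 := by linarith
      exact absurd (eq_of_interchange hdim h1 h2 h3 hy hy1 rfl (by simpa using hs)) hyne.symm
  have horbit (n : ℕ) : ‖σ^[n] x‖ = 1 ∧ σ (σ^[n] x) - σ^[n] x = σ x - x := by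
    induction n with
    | zero => exact ⟨hx, rfl⟩
    | succ n ih =>
      rw [Function.iterate_succ_apply']
      refine ⟨h1 _ ih.1, (hstep _ ih.1 fun h ↦ hne ?_).trans ih.2⟩
      rw [← sub_eq_zero, ← ih.2, h, sub_self]
  have hprog (n : ℕ) : σ^[n] x = x + (n : ℝ) • (σ x - x) := by
    induction n with
    | zero => simp
    | succ n ih =>
      rw [Function.iterate_succ_apply', ← sub_add_cancel (σ (σ^[n] x)) (σ^[n] x), (horbit n).2, ih]
      push_cast
      module
  have hd : 0 < ‖σ x - x‖ := norm_pos_iff.2 (sub_ne_zero.2 hne)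
  obtain ⟨n, hn⟩ := exists_nat_gt (2 / ‖σ x - x‖)
  rw [div_lt_iff₀ hd] at hn
  have hle : ‖(n : ℝ) • (σ x - x)‖ ≤ 2 := by
    rw [← add_sub_cancel_left x ((n : ℝ) • (σ x - x)), ← hprog n]
    refine (norm_sub_le _ _).trans ?_
    rw [(horbit n).1, hx]
    norm_num
  rw [norm_smul, Real.norm_natCast] at hle
  linarith

end Plane

section Transfer

variable {X Y : Type*} [NormedAddCommGroup X] [NormedAddCommGroup Y]

lemma almostAdditiveAt_map_iff {τ : X → Y} (hmap : ∀ u : X, ‖u‖ = 1 → ‖τ u‖ = 1)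
    (hsurj : ∀ w : Y, ‖w‖ = 1 → ∃ u : X, ‖u‖ = 1 ∧ τ u = w)
    (hsub : ∀ u v : X, ‖u‖ = 1 → ‖v‖ = 1 → ‖τ u - τ v‖ = ‖u - v‖)
    (hadd : ∀ u v : X, ‖u‖ = 1 → ‖v‖ = 1 → ‖τ u + τ v‖ = ‖u + v‖) {u : X} (hu : ‖u‖ = 1) :
    AlmostAdditiveAt u ↔ AlmostAdditiveAt (τ u) := by
  refine forall₂_congr fun ε hε ↦ exists_congr fun δ ↦ and_congr_right fun hδ ↦ ?_
  constructor
  · intro h y z hy hz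
    obtain ⟨y, hy', rfl⟩ := hsurj y hy
    obtain ⟨z, hz', rfl⟩ := hsurj z hz
    rw [hsub y u hy' hu, hsub z u hz' hu, hadd y z hy' hz']
    exact h y z hy' hz'
  · intro h y z hy hz
    rw [← hsub y u hy hu, ← hsub z u hz hu, ← hadd y z hy hz]
    exact h _ _ (hmap y hy) (hmap z hz)

variable [NormedSpace ℝ X] [NormedSpace ℝ Y]

lemma norm_map_add_map (hdim : Module.finrank ℝ X = 2) {τ : X → Y}
    (hmap : ∀ u : X, ‖u‖ = 1 → ‖τ u‖ = 1)
    (hsurj : ∀ w : Y, ‖w‖ = 1 → ∃ u : X, ‖u‖ = 1 ∧ τ u = w)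
    (hiso : ∀ u v : X, ‖u‖ = 1 → ‖v‖ = 1 → ‖τ u - τ v‖ = ‖u - v‖) {u v : X}
    (hu : ‖u‖ = 1) (hv : ‖v‖ = 1) : ‖τ u + τ v‖ = ‖u + v‖ := by
  choose! g hg hτg using hsurj
  have hneg (x : X) (hx : ‖x‖ = 1) : ‖-τ x‖ = 1 := by rw [norm_neg, hmap x hx]
  have hadd (x y : X) (hx : ‖x‖ = 1) (hy : ‖y‖ = 1) : ‖-g (-τ x) + y‖ = ‖τ x + τ y‖ := by
    rw [neg_add_eq_sub, ← hiso _ _ hy (hg _ (hneg x hx)), hτg _ (hneg x hx), sub_neg_eq_add,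
      add_comm]
  have hid : -g (-τ u) = u := by
    refine sphere_map_eq_self (σ := fun x ↦ -g (-τ x)) hdim (fun x hx ↦ ?_) (fun x y hx hy ↦ ?_)
      (fun x hx ↦ ?_) (fun x y hx hy ↦ ?_) hu
    · rw [norm_neg, hg _ (hneg x hx)]
    · rw [neg_sub_neg, ← hiso _ _ (hg _ (hneg y hy)) (hg _ (hneg x hx)), hτg _ (hneg x hx),
        hτg _ (hneg y hy), neg_sub_neg, hiso x y hx hy]
    · rw [add_comm, hadd x x hx hx, ← two_smul ℝ, norm_smul, hmap x hx]
      norm_num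
    · rw [hadd x y hx hy, add_comm x, hadd y x hy hx, add_comm]
  rw [← hadd u v hu hv, hid]

end Transfer

/-- Corollary: transfer of piecewise `C¹`-differentiability.
Let `X`, `Y` be two-dimensional real normed spaces and `τ : S_X → S_Y` a surjective
isometry between their unit spheres. If the norm of `X` is piecewise `C¹` on `S_X`
(i.e. its set of non-differentiability points on the unit sphere is finite), then so
is the norm of `Y`; moreover the norm of `X` is differentiable at a point `x` of the
unit sphere iff the norm of `Y` is differentiable at `τ x`. -/
theorem stmt3 {X Y : Type*} [NormedAddCommGroup X] [NormedSpace ℝ X]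
    [NormedAddCommGroup Y] [NormedSpace ℝ Y]
    (hdimX : Module.finrank ℝ X = 2) (hdimY : Module.finrank ℝ Y = 2)
    (τ : X → Y)
    (hmap : ∀ u : X, ‖u‖ = 1 → ‖τ u‖ = 1)
    (hsurj : ∀ w : Y, ‖w‖ = 1 → ∃ u : X, ‖u‖ = 1 ∧ τ u = w)
    (hiso : ∀ u v : X, ‖u‖ = 1 → ‖v‖ = 1 → ‖τ u - τ v‖ = ‖u - v‖)
    (hpiece : {u : X | ‖u‖ = 1 ∧ ¬ DifferentiableAt ℝ (fun z : X => ‖z‖) u}.Finite) :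
    {w : Y | ‖w‖ = 1 ∧ ¬ DifferentiableAt ℝ (fun z : Y => ‖z‖) w}.Finite ∧
      ∀ u : X, ‖u‖ = 1 →
        (DifferentiableAt ℝ (fun z : X => ‖z‖) u ↔
         DifferentiableAt ℝ (fun z : Y => ‖z‖) (τ u)) := by
  have hiff (u : X) (hu : ‖u‖ = 1) : DifferentiableAt ℝ (fun z : X => ‖z‖) u ↔
      DifferentiableAt ℝ (fun z : Y => ‖z‖) (τ u) := by
    rw [differentiableAt_norm_iff_almostAdditiveAt hu,
      differentiableAt_norm_iff_almostAdditiveAt (hmap u hu)]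
    exact almostAdditiveAt_map_iff hmap hsurj hiso
      (fun _ _ => norm_map_add_map hdimX hmap hsurj hiso) hu
  refine ⟨(hpiece.image τ).subset ?_, hiff⟩
  rintro w ⟨hw, hnd⟩
  obtain ⟨u, hu, rfl⟩ := hsurj w hw
  exact ⟨u, ⟨hu, fun h => hnd ((hiff u hu).1 h)⟩, rfl⟩
end

section
/- Let X be a two-dimensional normed space whose unit sphere S_X is piecewise C¹-differentiable and contains two linearly independent points x, x̄ at which the norm is not differentiable. Then for any two-dimensional normed space Y, every surjective isometry τ : S_X → S_Y is linear (the restriction to S_X of a linear isometry of X onto Y). -/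
open Filter Topology Set

section Plane

variable {E F : Type*} [AddCommGroup E] [Module ℝ E] [AddCommGroup F] [Module ℝ F]

lemma exists_pair_coords (h2 : Module.finrank ℝ E = 2) {a b : E}
    (hab : LinearIndependent ℝ ![a, b]) (v : E) : ∃ s t : ℝ, v = s • a + t • b := by
  have hspan := hab.span_eq_top_of_card_eq_finrank (by simp [h2])
  have hv : v ∈ Submodule.span ℝ (Set.range ![a, b]) := hspan ▸ Submodule.mem_top
  rw [Matrix.range_cons, Matrix.range_cons, Matrix.range_empty, Set.union_empty,
    Set.singleton_union, Submodule.mem_span_pair] at hv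
  obtain ⟨s, t, h⟩ := hv
  exact ⟨s, t, h.symm⟩

lemma exists_linearMap_pair (h2 : Module.finrank ℝ E = 2) {a b : E}
    (hab : LinearIndependent ℝ ![a, b]) (a' b' : F) : ∃ L : E →ₗ[ℝ] F, L a = a' ∧ L b = b' := by
  let B := basisOfLinearIndependentOfCardEqFinrank hab (by simp [h2])
  refine ⟨B.constr ℝ ![a', b'], ?_, ?_⟩
  · simpa [B] using B.constr_basis ℝ ![a', b'] 0
  · simpa [B] using B.constr_basis ℝ ![a', b'] 1

end Plane

section DirDeriv

variable {E : Type*} [NormedAddCommGroup E] [NormedSpace ℝ E]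

/-- The one-sided directional derivative of the norm at `P` in the direction `h`. -/
noncomputable def normDirDeriv (P h : E) : ℝ :=
  sInf ((fun t : ℝ => (‖P + t • h‖ - ‖P‖) / t) '' Ioi 0)

lemma monotoneOn_norm_slope (P h : E) :
    MonotoneOn (fun t : ℝ => (‖P + t • h‖ - ‖P‖) / t) (Ioi 0) := by
  intro s hs t ht hst
  simp only [mem_Ioi] at hs ht
  have e : P + s • h = (1 - s / t) • P + (s / t) • (P + t • h) := by
    rw [smul_add, smul_smul, div_mul_cancel₀ _ ht.ne', sub_smul, one_smul]; abel
  have hn : ‖P + s • h‖ ≤ (1 - s / t) * ‖P‖ + (s / t) * ‖P + t • h‖ := by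
    rw [e]
    refine (norm_add_le _ _).trans ?_
    rw [norm_smul, norm_smul, Real.norm_of_nonneg (sub_nonneg.2 ((div_le_one ht).2 hst)),
      Real.norm_of_nonneg (div_nonneg hs.le ht.le)]
  rw [div_le_iff₀ hs, div_mul_eq_mul_div, mul_div_assoc]
  linarith

lemma bddBelow_norm_slope (P h : E) :
    BddBelow ((fun t : ℝ => (‖P + t • h‖ - ‖P‖) / t) '' Ioi 0) := by
  refine ⟨-‖h‖, ?_⟩
  rintro _ ⟨t, ht, rfl⟩
  simp only [mem_Ioi] at ht
  rw [le_div_iff₀ ht]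
  have := norm_sub_le (P + t • h) (t • h)
  rw [add_sub_cancel_right, norm_smul, Real.norm_of_nonneg ht.le] at this
  linarith

lemma normDirDeriv_le (P h : E) {t : ℝ} (ht : 0 < t) :
    normDirDeriv P h ≤ (‖P + t • h‖ - ‖P‖) / t :=
  csInf_le (bddBelow_norm_slope P h) ⟨t, ht, rfl⟩

lemma tendsto_norm_slope (P h : E) :
    Tendsto (fun t : ℝ => (‖P + t • h‖ - ‖P‖) / t) (𝓝[>] 0) (𝓝 (normDirDeriv P h)) :=
  (monotoneOn_norm_slope P h).tendsto_nhdsGT (bddBelow_norm_slope P h)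

lemma tendsto_norm_slope_of_tangent {P h : E} {c : ℝ → E}
    (hc : Tendsto (fun s => s⁻¹ • (c s - P)) (𝓝[>] 0) (𝓝 h)) :
    Tendsto (fun s => (‖c s‖ - ‖P‖) / s) (𝓝[>] 0) (𝓝 (normDirDeriv P h)) := by
  have h1 : Tendsto (fun s => (‖c s‖ - ‖P‖) / s - (‖P + s • h‖ - ‖P‖) / s)
      (𝓝[>] 0) (𝓝 0) := by
    have h0 : Tendsto (fun s => ‖s⁻¹ • (c s - P) - h‖) (𝓝[>] 0) (𝓝 0) := by
      simpa using (hc.sub_const h).norm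
    refine squeeze_zero_norm' ?_ h0
    filter_upwards [self_mem_nhdsWithin] with s hs
    simp only [mem_Ioi] at hs
    rw [← sub_div, sub_sub_sub_cancel_right, norm_div, Real.norm_of_nonneg hs.le,
      div_le_iff₀ hs, Real.norm_eq_abs]
    refine (abs_norm_sub_norm_le _ _).trans (le_of_eq ?_)
    rw [show c s - (P + s • h) = s • (s⁻¹ • (c s - P) - h) by
      rw [smul_sub, smul_inv_smul₀ hs.ne']; abel, norm_smul, Real.norm_of_nonneg hs.le, mul_comm]
  simpa using h1.add (tendsto_norm_slope P h)

lemma normDirDeriv_add_self (P h : E) (r : ℝ) :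
    normDirDeriv P (h + r • P) = normDirDeriv P h + r * ‖P‖ := by
  have h1 : Tendsto (fun s : ℝ => s⁻¹ • ((P + s • h) + (s * r) • (P + s • h) - P))
      (𝓝[>] 0) (𝓝 (h + r • P)) := by
    have : Tendsto (fun s : ℝ => h + r • (P + s • h)) (𝓝[>] 0) (𝓝 (h + r • (P + (0 : ℝ) • h))) :=
      tendsto_nhdsWithin_of_tendsto_nhds (Continuous.tendsto (by fun_prop) 0)
    rw [zero_smul, add_zero] at this
    refine this.congr' ?_
    filter_upwards [self_mem_nhdsWithin] with s hs
    simp only [mem_Ioi] at hs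
    rw [show P + s • h + (s * r) • (P + s • h) - P = s • (h + r • (P + s • h)) by module,
      inv_smul_smul₀ hs.ne']
  have h2 := tendsto_norm_slope_of_tangent h1
  refine tendsto_nhds_unique h2 ?_
  have h3 : Tendsto (fun s : ℝ => (‖P + s • h‖ - ‖P‖) / s + r * ‖P + s • h‖) (𝓝[>] 0)
      (𝓝 (normDirDeriv P h + r * ‖P + (0 : ℝ) • h‖)) :=
    (tendsto_norm_slope P h).add
      (tendsto_nhdsWithin_of_tendsto_nhds (Continuous.tendsto (by fun_prop) 0))
  rw [zero_smul, add_zero] at h3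
  refine h3.congr' ?_
  have : ∀ᶠ s : ℝ in 𝓝[>] 0, 0 < 1 + s * r := by
    refine tendsto_nhdsWithin_of_tendsto_nhds
      (f := fun s : ℝ => 1 + s * r) (Continuous.tendsto (by fun_prop) 0) |>.eventually_const_lt ?_
    simp
  filter_upwards [self_mem_nhdsWithin, this] with s hs hs'
  simp only [mem_Ioi] at hs
  rw [show P + s • h + (s * r) • (P + s • h) = (1 + s * r) • (P + s • h) by module, norm_smul,
    Real.norm_of_nonneg hs'.le]
  field_simp
  ring

lemma normDirDeriv_zero (P : E) : normDirDeriv P 0 = 0 := by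
  refine tendsto_nhds_unique (tendsto_norm_slope P 0) ?_
  simp

lemma normDirDeriv_smul (P h : E) {r : ℝ} (hr : 0 ≤ r) :
    normDirDeriv P (r • h) = r * normDirDeriv P h := by
  rcases hr.eq_or_lt with rfl | hr
  · simp [normDirDeriv_zero]
  refine tendsto_nhds_unique (tendsto_norm_slope P (r • h)) ?_
  have h1 : Tendsto (fun s : ℝ => s * r) (𝓝[>] 0) (𝓝[>] 0) := by
    refine tendsto_nhdsWithin_iff.2 ⟨?_, ?_⟩
    · exact tendsto_nhdsWithin_of_tendsto_nhds (by simpa using (continuous_mul_const r).tendsto 0)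
    · filter_upwards [self_mem_nhdsWithin] with s hs using mul_pos hs hr
  refine (((tendsto_norm_slope P h).comp h1).const_mul r).congr fun s => ?_
  simp only [Function.comp, smul_smul]
  field_simp

lemma normDirDeriv_smul_left (P h : E) {r : ℝ} (hr : 0 < r) :
    normDirDeriv (r • P) h = normDirDeriv P h := by
  have hrh : normDirDeriv (r • P) (r • h) = r * normDirDeriv P h := by
    refine tendsto_nhds_unique (tendsto_norm_slope (r • P) (r • h))
      (((tendsto_norm_slope P h).const_mul r).congr fun s => ?_)
    rw [smul_comm s r h, ← smul_add, norm_smul, norm_smul, Real.norm_of_nonneg hr.le]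
    ring
  rw [normDirDeriv_smul _ _ hr.le] at hrh
  exact mul_left_cancel₀ hr.ne' hrh

lemma neg_normDirDeriv_neg_le (P h : E) : -normDirDeriv P (-h) ≤ normDirDeriv P h := by
  have h1 := (tendsto_norm_slope P h).add (tendsto_norm_slope P (-h))
  have : 0 ≤ normDirDeriv P h + normDirDeriv P (-h) := by
    refine ge_of_tendsto h1 ?_
    filter_upwards [self_mem_nhdsWithin] with s hs
    simp only [mem_Ioi] at hs
    rw [← add_div]
    refine div_nonneg ?_ hs.le
    have := norm_add_le (P + s • h) (P + s • -h)
    rw [show P + s • h + (P + s • -h) = (2 : ℝ) • P by module, norm_smul,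
      Real.norm_of_nonneg zero_le_two] at this
    linarith
  linarith

lemma HasFDerivAt.normDirDeriv_eq {P : E} {f : E →L[ℝ] ℝ} (hf : HasFDerivAt (‖·‖) f P) (h : E) :
    normDirDeriv P h = f h := by
  have h1 := (hf.hasLineDerivAt h).tendsto_slope_zero_right
  refine tendsto_nhds_unique (tendsto_norm_slope P h) (h1.congr fun s => ?_)
  simp [div_eq_inv_mul]

lemma HasFDerivAt.norm_apply_self {P : E} {f : E →L[ℝ] ℝ} (hf : HasFDerivAt (‖·‖) f P) :
    f P = ‖P‖ := by
  rw [← hf.fderiv, hf.differentiableAt.fderiv_norm_self]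

lemma HasFDerivAt.norm_apply_le {P : E} {f : E →L[ℝ] ℝ} (hf : HasFDerivAt (‖·‖) f P) (v : E) :
    |f v| ≤ ‖v‖ := by
  have := hf.le_of_lipschitz (lipschitzWith_one_norm)
  simpa using f.le_of_opNorm_le this v

/-- In a plane, the norm is differentiable at a nonzero point as soon as its two one-sided
derivatives along one transversal direction agree. -/
lemma differentiableAt_norm_of_normDirDeriv (h2 : Module.finrank ℝ E = 2) {P w : E}
    (hPw : LinearIndependent ℝ ![P, w]) (hw : normDirDeriv P w + normDirDeriv P (-w) ≤ 0) :
    DifferentiableAt ℝ (fun z : E => ‖z‖) P := by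
  have : FiniteDimensional ℝ E := Module.finite_of_finrank_eq_succ h2
  have hneg : normDirDeriv P (-w) = -normDirDeriv P w := by
    have := neg_normDirDeriv_neg_le P w
    linarith
  obtain ⟨L, hLP, hLw⟩ := exists_linearMap_pair h2 hPw ‖P‖ (normDirDeriv P w)
  have hdir : ∀ h, normDirDeriv P h = L h := by
    intro h
    obtain ⟨s, t, rfl⟩ := exists_pair_coords h2 hPw h
    rw [add_comm, normDirDeriv_add_self, map_add, map_smul, map_smul, hLP, hLw]
    congr 1
    rcases le_total 0 t with ht | ht
    · rw [normDirDeriv_smul _ _ ht, smul_eq_mul]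
    · rw [show t • w = (-t) • (-w) by module, normDirDeriv_smul _ _ (neg_nonneg.2 ht), hneg,
        smul_eq_mul]
      ring
  refine (lipschitzWith_one_norm.hasFDerivAt_of_hasLineDerivAt_of_closure
    (s := Set.univ) (L := LinearMap.toContinuousLinearMap L) (by simp) ?_).differentiableAt
  intro v _
  have hr : ∀ v, HasDerivWithinAt (fun t : ℝ => ‖P + t • v‖) (L v) (Ioi 0) 0 := by
    intro v
    rw [hasDerivWithinAt_iff_tendsto_slope' (by simp)]
    rw [← hdir v]
    refine (tendsto_norm_slope P v).congr fun s => ?_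
    simp [slope_def_field]
  have hl : HasDerivWithinAt (fun t : ℝ => ‖P + t • v‖) (L v) (Iio 0) 0 := by
    have h1 := hr (-v)
    have h2 : HasDerivWithinAt (fun t : ℝ => -t) (-1) (Iio 0) 0 := (hasDerivWithinAt_id _ _).neg
    have h3 := HasDerivWithinAt.scomp_of_eq (h := fun t : ℝ => -t) (0 : ℝ) h1 h2
      (fun t ht => by simpa using ht) (by simp)
    simpa [Function.comp_def] using h3
  have := hl.Iic_of_Iio.union (hr v).Ici_of_Ioi
  rwa [Iic_union_Ici, hasDerivWithinAt_univ] at this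

end DirDeriv

section Rigidity

variable {E : Type*} [NormedAddCommGroup E] [NormedSpace ℝ E]

lemma StrongDual.apply_le_norm {f : StrongDual ℝ E} (hf : ‖f‖ ≤ 1) (v : E) : f v ≤ ‖v‖ := by
  simpa using (le_abs_self _).trans (f.le_of_opNorm_le hf v)

lemma apply_eq_one_of_add {f : StrongDual ℝ E} (hf : ‖f‖ ≤ 1) {a b : E} (ha : ‖a‖ = 1)
    (hb : ‖b‖ = 1) (hab : f (a + b) = 2) : f a = 1 ∧ f b = 1 := by
  have h1 := StrongDual.apply_le_norm hf a
  have h2 := StrongDual.apply_le_norm hf b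
  rw [map_add] at hab
  constructor <;> linarith

lemma linearIndependent_of_apply_eq_one {f : StrongDual ℝ E} {a b : E} (ha : f a = 1)
    (hb : f b = 1) (hab : a ≠ b) : LinearIndependent ℝ ![a, b] := by
  rw [LinearIndependent.pair_iff]
  intro s t h
  have h1 : s + t = 0 := by simpa [ha, hb] using congrArg f h
  obtain rfl : t = -s := by linarith
  have h3 : s • (a - b) = 0 := by rw [← h]; module
  have := (smul_eq_zero.1 h3).resolve_right (sub_ne_zero.2 hab)
  simp [this]

/-- An isometry of the unit sphere of a plane which moves each point only along a segment
contained in the sphere is the identity. -/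
theorem sphere_isometry_eq_self (h2 : Module.finrank ℝ E = 2) {σ : E → E}
    (hm : ∀ u, ‖u‖ = 1 → ‖σ u‖ = 1)
    (hi : ∀ u v, ‖u‖ = 1 → ‖v‖ = 1 → ‖σ u - σ v‖ = ‖u - v‖)
    (hs : ∀ u, ‖u‖ = 1 → ‖u + σ u‖ = 2) {u : E} (hu : ‖u‖ = 1) : σ u = u := by
  have : FiniteDimensional ℝ E := Module.finite_of_finrank_eq_succ h2
  by_contra hne
  obtain ⟨f, hf, hfu⟩ := exists_dual_vector'' ℝ (u + σ u)
  rw [hs u hu] at hfu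
  obtain ⟨fu, fσ⟩ := apply_eq_one_of_add hf hu (hm u hu) hfu
  have hli := linearIndependent_of_apply_eq_one fu fσ (Ne.symm hne)
  obtain ⟨g', hgu, hgσ⟩ := exists_linearMap_pair h2 hli (0 : ℝ) 1
  let g : StrongDual ℝ E := LinearMap.toContinuousLinearMap g'
  replace hgu : g u = 0 := hgu
  replace hgσ : g (σ u) = 1 := hgσ
  set e := σ u - u with he
  have e0 : e ≠ 0 := sub_ne_zero.2 hne
  have hfe : f e = 0 := by simp [he, fu, fσ]
  have hge : g e = 1 := by simp [he, hgu, hgσ]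
  have coord : ∀ v, v = f v • u + g v • e := by
    intro v
    obtain ⟨s, t, rfl⟩ := exists_pair_coords h2 hli v
    simp only [map_add, map_smul, fu, fσ, hgu, hgσ, smul_eq_mul, mul_one, mul_zero, zero_add, he]
    module
  set K : Set E := {v | ‖v‖ = 1 ∧ f v = 1} with hK
  have Kc : IsCompact K := by
    refine (isCompact_closedBall (0 : E) 1).of_isClosed_subset ?_ ?_
    · exact (isClosed_eq continuous_norm continuous_const).inter
        (isClosed_eq f.continuous continuous_const)
    · intro v hv
      simp [hv.1]
  obtain ⟨p, hpK, hp⟩ := Kc.exists_isMinOn ⟨u, hu, fu⟩ g.continuous.continuousOn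
  obtain ⟨q, hqK, hq⟩ := Kc.exists_isMaxOn ⟨u, hu, fu⟩ g.continuous.continuousOn
  replace hp : ∀ v ∈ K, g p ≤ g v := fun v hv => hp hv
  replace hq : ∀ v ∈ K, g v ≤ g q := fun v hv => hq hv
  have gp0 : g p ≤ 0 := hgu ▸ hp u ⟨hu, fu⟩
  have gq1 : 1 ≤ g q := hgσ ▸ hq _ ⟨hm u hu, fσ⟩
  have coordK : ∀ v ∈ K, v = u + g v • e := by
    intro v hv
    have := coord v
    rwa [hv.2, one_smul] at this
  have distK : ∀ v ∈ K, ∀ w ∈ K, ‖v - w‖ = |g v - g w| * ‖e‖ := by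
    intro v hv w hw
    rw [← Real.norm_eq_abs, ← norm_smul, sub_smul]
    congr 1
    conv_lhs => rw [coordK v hv, coordK w hw]
    abel
  have segK : ∀ a b : ℝ, 0 ≤ a → 0 ≤ b → a + b = 1 → a • p + b • q ∈ K := by
    intro a b ha hb hab
    have hf1 : f (a • p + b • q) = 1 := by simp [hpK.2, hqK.2, hab]
    refine ⟨le_antisymm ?_ (hf1 ▸ StrongDual.apply_le_norm hf _), hf1⟩
    have := convex_closedBall (0 : E) 1 (x := p) (by simp [hpK.1]) (y := q) (by simp [hqK.1])
      ha hb hab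
    simpa using this
  have hpq : p ≠ q := by
    rintro rfl
    linarith
  have hlipq := linearIndependent_of_apply_eq_one hpK.2 hqK.2 hpq
  have inner : ∀ a b : ℝ, 0 < a → 0 < b → a + b = 1 → f (σ (a • p + b • q)) = 1 := by
    intro a b ha hb hab
    obtain ⟨hv, -⟩ := segK a b ha.le hb.le hab
    obtain ⟨f', hf', hfv⟩ := exists_dual_vector'' ℝ (a • p + b • q + σ (a • p + b • q))
    rw [hs _ hv] at hfv
    obtain ⟨h3, h4⟩ := apply_eq_one_of_add hf' hv (hm _ hv) hfv
    have hp1 := StrongDual.apply_le_norm hf' p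
    have hq1 := StrongDual.apply_le_norm hf' q
    rw [hpK.1] at hp1
    rw [hqK.1] at hq1
    simp only [map_add, map_smul, smul_eq_mul] at h3
    have fp : f' p = 1 := by
      refine le_antisymm hp1 (le_of_mul_le_mul_left ?_ ha)
      nlinarith
    have fq : f' q = 1 := by
      refine le_antisymm hq1 (le_of_mul_le_mul_left ?_ hb)
      nlinarith
    obtain ⟨s, t, hst⟩ := exists_pair_coords h2 hlipq (σ (a • p + b • q))
    rw [hst] at h4 ⊢
    simpa [fp, fq, hpK.2, hqK.2] using h4
  have near : ∀ v ∈ K, ∀ w : E, (∀ b : ℝ, 0 < b → b < 1 →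
      f (σ ((1 - b) • v + b • w)) = 1 ∧ ‖(1 - b) • v + b • w‖ = 1) → σ v ∈ K := by
    intro v hv w hvw
    refine ⟨hm v hv.1, ?_⟩
    have hcont : Tendsto (fun b : ℝ => ‖v - ((1 - b) • v + b • w)‖) (𝓝[>] 0)
        (𝓝 ‖v - ((1 - (0 : ℝ)) • v + (0 : ℝ) • w)‖) :=
      tendsto_nhdsWithin_of_tendsto_nhds (Continuous.tendsto (by fun_prop) 0)
    have hle : |f (σ v) - 1| ≤ 0 := by
      refine ge_of_tendsto (by simpa using hcont) ?_
      filter_upwards [Ioo_mem_nhdsGT (zero_lt_one' ℝ)] with b hb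
      obtain ⟨h5, h6⟩ := hvw b hb.1 hb.2
      have := f.le_of_opNorm_le hf (σ v - σ ((1 - b) • v + b • w))
      rwa [map_sub, h5, hi _ _ hv.1 h6, one_mul] at this
    exact sub_eq_zero.1 (abs_nonpos_iff.1 hle)
  have σp : σ p ∈ K := near p hpK q fun b hb hb1 =>
    ⟨inner _ _ (by linarith) hb (by ring), (segK _ _ (by linarith) hb.le (by ring)).1⟩
  have σq : σ q ∈ K := by
    refine near q hqK p fun b hb hb1 => ?_
    rw [add_comm]
    exact ⟨inner _ _ hb (by linarith) (by ring), (segK _ _ hb.le (by linarith) (by ring)).1⟩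
  have hpqd := hi p q hpK.1 hqK.1
  rw [distK _ σp _ σq, distK _ hpK _ hqK] at hpqd
  replace hpqd := mul_right_cancel₀ (norm_ne_zero_iff.2 e0) hpqd
  have b1 := hp _ σp
  have b2 := hq _ σp
  have b3 := hp _ σq
  have b4 := hq _ σq
  rw [abs_of_nonpos (show g p - g q ≤ 0 by linarith)] at hpqd
  rcases le_total (g (σ p)) (g (σ q)) with hle | hle
  · rw [abs_of_nonpos (by linarith)] at hpqd
    have gσp : g (σ p) = g p := by linarith
    have h7 := hi u p hu hpK.1
    rw [distK _ ⟨hm u hu, fσ⟩ _ σp, distK _ ⟨hu, fu⟩ _ hpK, gσp, hgσ, hgu] at h7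
    replace h7 := mul_right_cancel₀ (norm_ne_zero_iff.2 e0) h7
    rw [abs_of_nonneg (by linarith), abs_of_nonneg (by linarith)] at h7
    linarith
  · rw [abs_of_nonneg (by linarith)] at hpqd
    have gσp : g (σ p) = g q := by linarith
    have σpq : σ p = q := by rw [coordK _ σp, coordK _ hqK, gσp]
    set c : ℝ → E := fun s => ‖p - s • e‖⁻¹ • (p - s • e) with hc
    have hpos : ∀ s : ℝ, 0 < s → 1 < ‖p - s • e‖ := by
      intro s hs
      have hf1 : f (p - s • e) = 1 := by simp [hpK.2, hfe]
      refine lt_of_le_of_ne (hf1 ▸ StrongDual.apply_le_norm hf _) fun h => ?_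
      have := hp (p - s • e) ⟨h.symm, hf1⟩
      simp [hge] at this
      linarith
    have hc1 : ∀ s : ℝ, 0 < s → ‖c s‖ = 1 := by
      intro s hs
      have := hpos s hs
      rw [hc, norm_smul, norm_inv, norm_norm, inv_mul_cancel₀ (by linarith)]
    have hfc : ∀ s : ℝ, 0 < s → f (c s) < 1 := by
      intro s hs
      simp only [hc, map_smul, map_sub, hpK.2, hfe, smul_eq_mul, mul_zero, sub_zero, mul_one]
      exact inv_lt_one_of_one_lt₀ (hpos s hs)
    have hct : Tendsto c (𝓝[>] 0) (𝓝 p) := by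
      have h8 : ContinuousAt c 0 := by
        refine ContinuousAt.smul (ContinuousAt.inv₀ (by fun_prop) ?_) (by fun_prop)
        simp [hpK.1]
      have h9 : c 0 = p := by simp [hc, hpK.1]
      exact h9 ▸ h8.tendsto.mono_left nhdsWithin_le_nhds
    have hσt : Tendsto (fun s => σ (c s)) (𝓝[>] 0) (𝓝 q) := by
      rw [tendsto_iff_norm_sub_tendsto_zero] at hct ⊢
      refine hct.congr' ?_
      filter_upwards [self_mem_nhdsWithin] with s hs
      rw [← σpq, hi _ _ (hc1 s hs) hpK.1]
    have hsum := hct.add hσt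
    have hf2 : Tendsto (fun s => f (c s + σ (c s))) (𝓝[>] 0) (𝓝 (f (p + q))) :=
      (f.continuous.tendsto _).comp hsum
    have hg2 : Tendsto (fun s => g (c s + σ (c s))) (𝓝[>] 0) (𝓝 (g (p + q))) :=
      (g.continuous.tendsto _).comp hsum
    have hfpq : f (p + q) = 2 := by rw [map_add, hpK.2, hqK.2]; norm_num
    rw [hfpq] at hf2
    have hr := hg2.div hf2 two_ne_zero
    have hbad : ∀ᶠ s in 𝓝[>] (0 : ℝ), False := by
      filter_upwards [self_mem_nhdsWithin, hf2.eventually_const_lt zero_lt_two,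
        hr.eventually_const_lt (show g p < g (p + q) / 2 by rw [map_add]; linarith),
        hr.eventually_lt_const (show g (p + q) / 2 < g q by rw [map_add]; linarith)]
        with s hs0 hfs hgs hgs'
      set μ := c s + σ (c s) with hμ
      set r := g μ / f μ with hr'
      have hd : 0 < g q - g p := by linarith
      have hmem := segK ((g q - r) / (g q - g p)) ((r - g p) / (g q - g p))
        (div_nonneg (sub_nonneg.2 hgs'.le) hd.le) (div_nonneg (sub_nonneg.2 hgs.le) hd.le)
        (by field_simp; ring)
      have hμe : μ = f μ • (((g q - r) / (g q - g p)) • p + ((r - g p) / (g q - g p)) • q) := by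
        conv_lhs => rw [coord μ]
        rw [coordK _ hmem, smul_add, smul_smul]
        congr 2
        simp only [map_add, map_smul, smul_eq_mul]
        field_simp
        rw [hr']
        field_simp
        ring
      have hn : ‖μ‖ = f μ := by
        conv_lhs => rw [hμe, norm_smul, hmem.1, Real.norm_of_nonneg hfs.le, mul_one]
      rw [hs _ (hc1 s hs0), map_add] at hn
      have h10 := hfc s hs0
      have h11 := StrongDual.apply_le_norm hf (σ (c s))
      rw [hm _ (hc1 s hs0)] at h11
      linarith
    exact hbad.exists.elim fun _ h => h

end Rigidity

section SphereIsometry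

variable {X Y : Type*} [NormedAddCommGroup X] [NormedAddCommGroup Y]

/-- `τ` restricts to a surjective isometry between the unit spheres. -/
structure IsSphereIsometry (τ : X → Y) : Prop where
  norm_map : ∀ u, ‖u‖ = 1 → ‖τ u‖ = 1
  surj : ∀ w, ‖w‖ = 1 → ∃ u, ‖u‖ = 1 ∧ τ u = w
  isom : ∀ u v, ‖u‖ = 1 → ‖v‖ = 1 → ‖τ u - τ v‖ = ‖u - v‖

namespace IsSphereIsometry

variable {τ : X → Y}

lemma injOn (hτ : IsSphereIsometry τ) {u v : X} (hu : ‖u‖ = 1) (hv : ‖v‖ = 1)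
    (h : τ u = τ v) : u = v := by
  have := hτ.isom u v hu hv
  rwa [h, sub_self, norm_zero, eq_comm, norm_sub_eq_zero_iff] at this

lemma exists_inverse (hτ : IsSphereIsometry τ) : ∃ ι : Y → X, IsSphereIsometry ι ∧
    (∀ u, ‖u‖ = 1 → ι (τ u) = u) ∧ ∀ w, ‖w‖ = 1 → τ (ι w) = w := by
  choose! ι hι1 hι2 using hτ.surj
  have hleft : ∀ u, ‖u‖ = 1 → ι (τ u) = u := fun u hu =>
    hτ.injOn (hι1 _ (hτ.norm_map u hu)) hu (hι2 _ (hτ.norm_map u hu))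
  refine ⟨ι, ⟨hι1, fun u hu => ⟨τ u, hτ.norm_map u hu, hleft u hu⟩, fun v w hv hw => ?_⟩,
    hleft, hι2⟩
  rw [← hτ.isom _ _ (hι1 v hv) (hι1 w hw), hι2 v hv, hι2 w hw]

lemma continuous_comp (hτ : IsSphereIsometry τ) {c : ℝ → X}
    (hc : Continuous c) (h1 : ∀ s, ‖c s‖ = 1) : Continuous fun s => τ (c s) := by
  rw [Metric.continuous_iff] at hc ⊢
  simp only [dist_eq_norm] at hc ⊢
  intro b ε hε
  obtain ⟨δ, hδ, h⟩ := hc b ε hε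
  exact ⟨δ, hδ, fun s hs => by rw [hτ.isom _ _ (h1 s) (h1 b)]; exact h s hs⟩

variable [NormedSpace ℝ X] [NormedSpace ℝ Y]

lemma map_neg (h2 : Module.finrank ℝ X = 2) (hτ : IsSphereIsometry τ) {u : X} (hu : ‖u‖ = 1) :
    τ (-u) = -τ u := by
  obtain ⟨ι, hι, -, hr⟩ := hτ.exists_inverse
  have hn : ∀ u, ‖u‖ = 1 → ‖-τ u‖ = 1 := fun u hu => by rw [norm_neg, hτ.norm_map u hu]
  have key := sphere_isometry_eq_self h2 (σ := fun u => -ι (-τ u))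
    (fun u hu => by rw [norm_neg, hι.norm_map _ (hn u hu)])
    (fun u v hu hv => by
      rw [← neg_sub', norm_neg, hι.isom _ _ (hn u hu) (hn v hv), ← neg_sub', norm_neg,
        hτ.isom u v hu hv])
    (fun u hu => by
      rw [← sub_eq_add_neg, ← hτ.isom _ _ hu (hι.norm_map _ (hn u hu)), hr _ (hn u hu),
        sub_neg_eq_add, ← two_smul ℝ, norm_smul, hτ.norm_map u hu]
      simp) hu
  rw [← hr _ (hn u hu)]
  congr 1
  rw [← key, neg_neg, key]

lemma isom_add (h2 : Module.finrank ℝ X = 2) (hτ : IsSphereIsometry τ) {u v : X}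
    (hu : ‖u‖ = 1) (hv : ‖v‖ = 1) : ‖τ u + τ v‖ = ‖u + v‖ := by
  rw [← sub_neg_eq_add, ← hτ.map_neg h2 hv, hτ.isom _ _ hu (by rwa [norm_neg]), sub_neg_eq_add]

end IsSphereIsometry

end SphereIsometry

section Tangent

variable {E : Type*} [NormedAddCommGroup E] [NormedSpace ℝ E]

/-- The radial projection to the unit sphere of the line through `x` in direction `v`. -/
noncomputable def sphereCurve (x v : E) (s : ℝ) : E := ‖x + s • v‖⁻¹ • (x + s • v)

lemma add_smul_ne_zero_of_linearIndependent {x v : E} (h : LinearIndependent ℝ ![x, v]) (s : ℝ) :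
    x + s • v ≠ 0 := by
  intro h0
  have := LinearIndependent.pair_iff.1 h 1 s (by rwa [one_smul])
  exact one_ne_zero this.1

lemma norm_sphereCurve {x v : E} (h : LinearIndependent ℝ ![x, v]) (s : ℝ) :
    ‖sphereCurve x v s‖ = 1 := by
  rw [sphereCurve, norm_smul, norm_inv, norm_norm,
    inv_mul_cancel₀ (norm_ne_zero_iff.2 (add_smul_ne_zero_of_linearIndependent h s))]

lemma continuous_sphereCurve {x v : E} (h : LinearIndependent ℝ ![x, v]) :
    Continuous (sphereCurve x v) := by
  refine Continuous.smul (Continuous.inv₀ (by fun_prop) fun s => ?_) (by fun_prop)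
  exact norm_ne_zero_iff.2 (add_smul_ne_zero_of_linearIndependent h s)

lemma sphereCurve_zero {x : E} (hx : ‖x‖ = 1) (v : E) : sphereCurve x v 0 = x := by
  simp [sphereCurve, hx]

lemma sphereCurve_injective {x v : E} (h : LinearIndependent ℝ ![x, v]) :
    Function.Injective (sphereCurve x v) := by
  intro s t hst
  have hs := inv_ne_zero (norm_ne_zero_iff.2 (add_smul_ne_zero_of_linearIndependent h s))
  simp only [sphereCurve] at hst
  set A := ‖x + s • v‖⁻¹
  set B := ‖x + t • v‖⁻¹
  obtain ⟨h1, h2⟩ := LinearIndependent.pair_iff.1 h (A - B) (A * s - B * t) (by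
    rw [← sub_eq_zero] at hst
    rw [← hst]
    module)
  rw [← sub_eq_zero.1 h1, ← mul_sub] at h2
  exact sub_eq_zero.1 ((mul_eq_zero.1 h2).resolve_left hs)

lemma tendsto_sphereCurve_slope {x : E} (hx : ‖x‖ = 1) (v : E) :
    Tendsto (fun s => s⁻¹ • (sphereCurve x v s - x)) (𝓝[>] 0)
      (𝓝 (v - normDirDeriv x v • x)) := by
  have hN : Tendsto (fun s : ℝ => ‖x + s • v‖⁻¹) (𝓝[>] 0) (𝓝 1) := by
    have : ContinuousAt (fun s : ℝ => ‖x + s • v‖⁻¹) 0 :=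
      ContinuousAt.inv₀ (by fun_prop) (by simp [hx])
    have := this.tendsto.mono_left (nhdsWithin_le_nhds (s := Ioi (0 : ℝ)))
    simpa [hx] using this
  have h1 := hN.smul ((tendsto_const_nhds (x := v)).sub
    ((tendsto_norm_slope x v).smul_const x))
  rw [one_smul] at h1
  refine h1.congr' ?_
  have : ∀ᶠ s : ℝ in 𝓝[>] 0, 0 < ‖x + s • v‖⁻¹ := hN.eventually_const_lt one_pos
  filter_upwards [self_mem_nhdsWithin, this] with s hs hNs
  simp only [mem_Ioi] at hs
  have hN0 : ‖x + s • v‖ ≠ 0 := (inv_pos.1 hNs).ne'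
  rw [sphereCurve, hx]
  set N := ‖x + s • v‖
  have e1 : s⁻¹ * s = 1 := inv_mul_cancel₀ hs.ne'
  have e2 : N⁻¹ * N = 1 := inv_mul_cancel₀ hN0
  have e3 : s⁻¹ • (N⁻¹ • (x + s • v) - x) = (s⁻¹ * N⁻¹ - s⁻¹) • x + (N⁻¹ * (s⁻¹ * s)) • v := by
    module
  have e4 : N⁻¹ • (v - ((N - 1) / s) • x) = (s⁻¹ * N⁻¹ - s⁻¹ * (N⁻¹ * N)) • x + N⁻¹ • v := by
    rw [div_eq_mul_inv]
    module
  rw [e3, e4, e1, e2, mul_one, mul_one]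

lemma exists_tangent_of_pos {y v : E} (hy : ‖y‖ = 1) (hyv : LinearIndependent ℝ ![y, v])
    {c : ℝ → E} {p q : ℝ → ℝ} {l : ℝ} (hc : ∀ᶠ s in 𝓝[>] 0, ‖c s‖ = 1)
    (hpq : ∀ s, c s = q s • y + p s • v) (hq : Tendsto q (𝓝[>] 0) (𝓝 1))
    (hp : Tendsto p (𝓝[>] 0) (𝓝 0)) (hpos : ∀ᶠ s in 𝓝[>] 0, 0 < p s)
    (hl : Tendsto (fun s => ‖c s - y‖ / s) (𝓝[>] 0) (𝓝 l)) :
    ∃ a, Tendsto (fun s => s⁻¹ • (c s - y)) (𝓝[>] 0) (𝓝 a) := by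
  have hqpos := hq.eventually_const_lt one_pos
  have hρ : Tendsto (fun s => p s / q s) (𝓝[>] 0) (𝓝[>] 0) := by
    have h0 := hp.div hq one_ne_zero
    rw [zero_div] at h0
    refine tendsto_nhdsWithin_iff.2 ⟨h0, ?_⟩
    filter_upwards [hqpos, hpos] with s h1 h2 using div_pos h2 h1
  have h1 : Tendsto (fun s => (1 - q s) / p s) (𝓝[>] 0) (𝓝 (normDirDeriv y v)) := by
    refine ((tendsto_norm_slope y v).comp hρ).congr' ?_
    filter_upwards [hqpos, hpos, hc] with s hqs hps hcs
    have : ‖y + (p s / q s) • v‖ = (q s)⁻¹ := by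
      rw [show y + (p s / q s) • v = (q s)⁻¹ • c s by
        rw [hpq s, smul_add, inv_smul_smul₀ hqs.ne', smul_smul, div_eq_inv_mul],
        norm_smul, hcs, norm_inv, Real.norm_of_nonneg hqs.le, mul_one]
    simp only [Function.comp, this, hy]
    field_simp
  set d := v - normDirDeriv y v • y
  have hd : d ≠ 0 := by
    intro h
    have := LinearIndependent.pair_iff.1 hyv (-normDirDeriv y v) 1 (by rw [← h]; module)
    exact one_ne_zero this.2
  have h2 : Tendsto (fun s => (p s)⁻¹ • (c s - y)) (𝓝[>] 0) (𝓝 d) := by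
    refine ((tendsto_const_nhds (x := v)).sub (h1.smul_const y)).congr' ?_
    filter_upwards [hpos] with s hps
    rw [hpq s, div_eq_mul_inv, show (p s)⁻¹ • (q s • y + p s • v - y) =
      ((p s)⁻¹ * p s) • v - ((1 - q s) * (p s)⁻¹) • y by module, inv_mul_cancel₀ hps.ne', one_smul]
  have h3 := hl.div h2.norm (norm_ne_zero_iff.2 hd)
  refine ⟨(l / ‖d‖) • d, (h3.smul h2).congr' ?_⟩
  have h4 := h2.norm.eventually_const_lt (norm_pos_iff.2 hd)
  filter_upwards [hpos, h4, self_mem_nhdsWithin] with s hps hs hs0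
  simp only [mem_Ioi] at hs0
  rw [norm_pos_iff, smul_ne_zero_iff] at hs
  have := norm_ne_zero_iff.2 hs.2
  simp only [Pi.div_apply]
  rw [norm_smul, norm_inv, Real.norm_of_nonneg hps.le, smul_smul]
  congr 1
  field_simp

/-- A continuous curve in the unit sphere of a plane that leaves `y` at constant speed has a
tangent vector at `y`. -/
lemma exists_tangent (h2 : Module.finrank ℝ E = 2) {y : E} (hy : ‖y‖ = 1) {c : ℝ → E} {l : ℝ}
    (hcc : ContinuousOn c (Ioi 0)) (hc : ∀ s, 0 < s → ‖c s‖ = 1) (hcy : ∀ s, 0 < s → c s ≠ y)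
    (hl : Tendsto (fun s => ‖c s - y‖ / s) (𝓝[>] 0) (𝓝 l)) :
    ∃ a, Tendsto (fun s => s⁻¹ • (c s - y)) (𝓝[>] 0) (𝓝 a) := by
  have : FiniteDimensional ℝ E := Module.finite_of_finrank_eq_succ h2
  have hy0 : y ≠ 0 := by
    rintro rfl
    simp at hy
  obtain ⟨v, hyv⟩ := exists_linearIndependent_pair_of_one_lt_finrank (R := ℝ) (by omega) hy0
  have hcy' : Tendsto c (𝓝[>] 0) (𝓝 y) := by
    rw [tendsto_iff_norm_sub_tendsto_zero]
    have h0 : Tendsto (fun s : ℝ => s) (𝓝[>] 0) (𝓝 0) :=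
      tendsto_nhdsWithin_of_tendsto_nhds tendsto_id
    have := hl.mul h0
    rw [mul_zero] at this
    refine this.congr' ?_
    filter_upwards [self_mem_nhdsWithin] with s hs
    exact div_mul_cancel₀ _ (ne_of_gt hs)
  obtain ⟨Q', hQy, hQv⟩ := exists_linearMap_pair h2 hyv (1 : ℝ) 0
  obtain ⟨P', hPy, hPv⟩ := exists_linearMap_pair h2 hyv (0 : ℝ) 1
  let Q : StrongDual ℝ E := LinearMap.toContinuousLinearMap Q'
  let P : StrongDual ℝ E := LinearMap.toContinuousLinearMap P'
  have hcoord : ∀ w, w = Q w • y + P w • v := by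
    intro w
    obtain ⟨s, t, rfl⟩ := exists_pair_coords h2 hyv w
    simp [Q, P, hQy, hQv, hPy, hPv]
  have hQ : Tendsto (fun s => Q (c s)) (𝓝[>] 0) (𝓝 1) := by
    have := (Q.continuous.tendsto y).comp hcy'
    rwa [show Q y = 1 from hQy] at this
  have hP : Tendsto (fun s => P (c s)) (𝓝[>] 0) (𝓝 0) := by
    have := (P.continuous.tendsto y).comp hcy'
    rwa [show P y = 0 from hPy] at this
  obtain ⟨δ, hδ, hδQ⟩ := mem_nhdsGT_iff_exists_Ioo_subset.1 (hQ.eventually_const_lt one_pos)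
  simp only [mem_Ioi] at hδ
  have hPne : ∀ s ∈ Ioo 0 δ, P (c s) ≠ 0 := by
    intro s hs h0
    have h1 := hcoord (c s)
    rw [h0, zero_smul, add_zero] at h1
    have h2 : 0 < Q (c s) := hδQ hs
    have h3 := congrArg norm h1
    rw [norm_smul, hc s hs.1, hy, Real.norm_of_nonneg h2.le, mul_one] at h3
    rw [← h3, one_smul] at h1
    exact hcy s hs.1 h1
  have hPc : ContinuousOn (fun s => P (c s)) (Ioo 0 δ) :=
    P.continuous.comp_continuousOn (hcc.mono fun s hs => hs.1)
  have hev : Ioo 0 δ ∈ 𝓝[>] (0 : ℝ) := Ioo_mem_nhdsGT hδ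
  have hsign : (∀ s ∈ Ioo 0 δ, 0 < P (c s)) ∨ ∀ s ∈ Ioo 0 δ, P (c s) < 0 := by
    by_contra! hcon
    obtain ⟨⟨s, hs, hs'⟩, t, ht, ht'⟩ := hcon
    obtain ⟨r, hr, hr0⟩ := isPreconnected_Ioo.intermediate_value hs ht hPc ⟨hs', ht'⟩
    exact hPne r hr hr0
  have hc' : ∀ᶠ s in 𝓝[>] 0, ‖c s‖ = 1 := by
    filter_upwards [self_mem_nhdsWithin] with s hs using hc s hs
  rcases hsign with hpos | hneg
  · exact exists_tangent_of_pos hy hyv hc' (fun s => hcoord (c s)) hQ hP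
      (by filter_upwards [hev] with s hs using hpos s hs) hl
  · refine exists_tangent_of_pos (v := -v) (p := fun s => -P (c s)) hy ?_ hc'
      (fun s => by rw [smul_neg, neg_smul, neg_neg]; exact hcoord (c s)) hQ (by simpa using hP.neg)
      (by filter_upwards [hev] with s hs using neg_pos.2 (hneg s hs)) hl
    rw [LinearIndependent.pair_iff] at hyv ⊢
    intro s t hst
    have := hyv s (-t) (by rw [← hst]; module)
    simpa using this

lemma normDirDeriv_eq_zero_of_tangent {y a : E} (hy : ‖y‖ = 1) {c : ℝ → E}
    (hc : ∀ s, 0 < s → ‖c s‖ = 1)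
    (ha : Tendsto (fun s => s⁻¹ • (c s - y)) (𝓝[>] 0) (𝓝 a)) : normDirDeriv y a = 0 := by
  refine tendsto_nhds_unique (tendsto_norm_slope_of_tangent ha) ?_
  refine tendsto_const_nhds.congr' ?_
  filter_upwards [self_mem_nhdsWithin] with s hs
  rw [hc s hs, hy, sub_self, zero_div]

/-- The one-sided derivatives of the norm at points approaching `2 • y` from the side of a
tangent vector `a` converge to the functional that is `1` at `y` and `0` at `a`. -/
lemma tendsto_normDirDeriv_along_tangent {y a : E} (hy : ‖y‖ = 1) (ha : normDirDeriv y a = 0)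
    {c : ℝ → E} (hc : Tendsto (fun s => s⁻¹ • (c s - y)) (𝓝[>] 0) (𝓝 a)) (α β : ℝ) :
    Tendsto (fun s => normDirDeriv (c s + y) (α • y + β • a)) (𝓝[>] 0) (𝓝 α) := by
  have upper : ∀ α β : ℝ, ∃ B : ℝ → ℝ, Tendsto B (𝓝[>] 0) (𝓝 α) ∧
      ∀ s, 0 < s → normDirDeriv (c s + y) (α • y + β • a) ≤ B s := by
    intro α β
    set θ : ℝ := (|β| + 1)⁻¹
    have hθ : 0 < θ := by positivity
    have hθβ : 0 ≤ 1 + θ * β := by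
      have h1 : θ * (|β| + 1) = 1 := inv_mul_cancel₀ (by positivity)
      nlinarith [neg_abs_le β]
    set w := α • y + β • a
    have t0 : Tendsto (fun s => s⁻¹ • (c s + y - (2 : ℝ) • y)) (𝓝[>] 0) (𝓝 a) := by
      refine hc.congr fun s => ?_
      congr 1
      module
    have t1 : Tendsto (fun s => s⁻¹ • (c s + y + (θ * s) • w - (2 : ℝ) • y)) (𝓝[>] 0)
        (𝓝 (a + θ • w)) := by
      refine (t0.add_const (θ • w)).congr' ?_
      filter_upwards [self_mem_nhdsWithin] with s hs
      simp only [mem_Ioi] at hs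
      rw [show c s + y + (θ * s) • w - (2 : ℝ) • y = (c s + y - (2 : ℝ) • y) + s • (θ • w) by
        module, smul_add s⁻¹ (c s + y - (2 : ℝ) • y), inv_smul_smul₀ hs.ne']
    have l0 := tendsto_norm_slope_of_tangent t0
    have l1 := tendsto_norm_slope_of_tangent t1
    rw [normDirDeriv_smul_left _ _ two_pos] at l0 l1
    rw [ha] at l0
    rw [show a + θ • w = (1 + θ * β) • a + (θ * α) • y by simp only [w]; module,
      normDirDeriv_add_self, normDirDeriv_smul _ _ hθβ, ha, hy] at l1
    refine ⟨fun s => (‖c s + y + (θ * s) • w‖ - ‖c s + y‖) / (θ * s), ?_, fun s hs =>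
      normDirDeriv_le _ _ (by positivity)⟩
    have l2 := (l1.sub l0).div_const θ
    rw [show ((1 + θ * β) * 0 + θ * α * 1 - 0) / θ = α by field_simp; ring] at l2
    refine l2.congr fun s => ?_
    field_simp
    ring
  obtain ⟨B, hB, hBle⟩ := upper α β
  obtain ⟨C, hC, hCle⟩ := upper (-α) (-β)
  have hC' := hC.neg
  rw [neg_neg] at hC'
  refine tendsto_of_tendsto_of_tendsto_of_le_of_le' hC' hB ?_ ?_
  · filter_upwards [self_mem_nhdsWithin] with s hs
    have h1 := hCle s hs
    have h2 := neg_normDirDeriv_neg_le (c s + y) (α • y + β • a)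
    rw [show (-α) • y + (-β) • a = -(α • y + β • a) by module] at h1
    linarith
  · filter_upwards [self_mem_nhdsWithin] with s hs using hBle s hs

end Tangent

section Corner

variable {E X Y : Type*} [NormedAddCommGroup E] [NormedSpace ℝ E]
  [NormedAddCommGroup X] [NormedSpace ℝ X] [NormedAddCommGroup Y] [NormedSpace ℝ Y]

/-- `a` and `b` are half-tangents to the unit sphere at its corner `x`. -/
structure HasNormCorner (x a b : E) (k : ℝ) : Prop where
  norm_eq : ‖x‖ = 1
  pos : 0 < k
  linearIndependent : LinearIndependent ℝ ![a, b]
  add_eq : a + b = (-k) • x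
  left : normDirDeriv x a = 0
  right : normDirDeriv x b = 0

lemma linearIndependent_of_normDirDeriv_eq_zero {y a : E} (hy : ‖y‖ = 1) (ha : a ≠ 0)
    (h : normDirDeriv y a = 0) : LinearIndependent ℝ ![y, a] := by
  have hy0 : y ≠ 0 := by
    rintro rfl
    simp at hy
  rw [LinearIndependent.pair_iff' hy0]
  rintro r rfl
  have := normDirDeriv_add_self y 0 r
  rw [zero_add, h, normDirDeriv_zero, hy] at this
  simp at this
  simp [← this] at ha

lemma LinearIndependent.pair_neg_right {x v : E} (h : LinearIndependent ℝ ![x, v]) :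
    LinearIndependent ℝ ![x, -v] := by
  rw [LinearIndependent.pair_iff] at h ⊢
  intro s t hst
  have := h s (-t) (by rw [← hst]; module)
  simpa using this

namespace HasNormCorner

variable {x a b : E} {k : ℝ}

lemma symm (h : HasNormCorner x a b k) : HasNormCorner x b a k :=
  ⟨h.norm_eq, h.pos, LinearIndependent.pair_symm_iff.1 h.linearIndependent,
    by rw [add_comm, h.add_eq], h.right, h.left⟩

lemma left_ne_zero (h : HasNormCorner x a b k) : a ≠ 0 := h.linearIndependent.ne_zero 0

lemma smul_eq (h : HasNormCorner x a b k) : x = (-k)⁻¹ • (a + b) := by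
  rw [h.add_eq, inv_smul_smul₀ (neg_ne_zero.2 h.pos.ne')]

lemma exists_eq_smul (h2 : Module.finrank ℝ E = 2) (hc : HasNormCorner x a b k) {h : E}
    (hh : normDirDeriv x h = 0) : ∃ β : ℝ, 0 ≤ β ∧ (h = β • a ∨ h = β • b) := by
  obtain ⟨α, β, rfl⟩ := exists_pair_coords h2 hc.linearIndependent h
  have hb := hc.add_eq
  rcases le_total β α with hle | hle
  · rw [show α • a + β • b = (α - β) • a + β • (a + b) by module, hb, smul_smul,
      normDirDeriv_add_self, normDirDeriv_smul _ _ (sub_nonneg.2 hle), hc.left, hc.norm_eq] at hh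
    obtain rfl : β = 0 := by simpa [hc.pos.ne'] using hh
    exact ⟨α, hle, Or.inl (by simp)⟩
  · rw [show α • a + β • b = (β - α) • b + α • (a + b) by module, hb, smul_smul,
      normDirDeriv_add_self, normDirDeriv_smul _ _ (sub_nonneg.2 hle), hc.right, hc.norm_eq] at hh
    obtain rfl : α = 0 := by simpa [hc.pos.ne'] using hh
    exact ⟨β, hle, Or.inr (by simp)⟩

lemma not_differentiableAt (hc : HasNormCorner x a b k) :
    ¬ DifferentiableAt ℝ (fun z : E => ‖z‖) x := by
  rintro ⟨f, hf⟩
  have h1 := hf.norm_apply_self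
  have h2 := hf.normDirDeriv_eq a
  have h3 := hf.normDirDeriv_eq b
  rw [hc.left] at h2
  rw [hc.right] at h3
  rw [hc.norm_eq, hc.smul_eq, map_smul, map_add, ← h2, ← h3] at h1
  simp at h1

end HasNormCorner

/-- The half-tangents `a` to `S_X` at `x` and `a'` to `S_Y` at `τ x` correspond to each other. -/
structure IsTangentImage (τ : X → Y) (x a : X) (a' : Y) : Prop where
  norm_eq : ‖a'‖ = ‖a‖
  sub : ∀ z, ‖z‖ = 1 → normDirDeriv (z - x) (-a) = normDirDeriv (τ z - τ x) (-a')
  add : ∀ z, ‖z‖ = 1 → normDirDeriv (z + x) a = normDirDeriv (τ z + τ x) a'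

lemma IsSphereIsometry.exists_tangentImage (h2X : Module.finrank ℝ X = 2)
    (h2Y : Module.finrank ℝ Y = 2) {τ : X → Y} (hτ : IsSphereIsometry τ) {x a : X}
    (hx : ‖x‖ = 1) {c : ℝ → X} (hcc : Continuous c) (hc : ∀ s, ‖c s‖ = 1)
    (hcx : ∀ s, 0 < s → c s ≠ x) (ha : Tendsto (fun s => s⁻¹ • (c s - x)) (𝓝[>] 0) (𝓝 a)) :
    ∃ a', Tendsto (fun s => s⁻¹ • (τ (c s) - τ x)) (𝓝[>] 0) (𝓝 a') ∧
      IsTangentImage τ x a a' := by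
  have hl : Tendsto (fun s => ‖τ (c s) - τ x‖ / s) (𝓝[>] 0) (𝓝 ‖a‖) := by
    refine ha.norm.congr' ?_
    filter_upwards [self_mem_nhdsWithin] with s hs
    rw [hτ.isom _ _ (hc s) hx, norm_smul, norm_inv, Real.norm_of_nonneg (le_of_lt hs),
      div_eq_inv_mul]
  obtain ⟨a', ha'⟩ := exists_tangent h2Y (hτ.norm_map x hx)
    (hτ.continuous_comp hcc hc).continuousOn (fun s _ => hτ.norm_map _ (hc s))
    (fun s hs h => hcx s hs (hτ.injOn (hc s) hx h)) hl
  refine ⟨a', ha', ?_, fun z hz => ?_, fun z hz => ?_⟩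
  · refine tendsto_nhds_unique ha'.norm (hl.congr' ?_)
    filter_upwards [self_mem_nhdsWithin] with s hs
    rw [norm_smul, norm_inv, Real.norm_of_nonneg (le_of_lt hs), div_eq_inv_mul]
  · have h1 : Tendsto (fun s => s⁻¹ • (z - c s - (z - x))) (𝓝[>] 0) (𝓝 (-a)) :=
      ha.neg.congr fun s => by module
    have h2 : Tendsto (fun s => s⁻¹ • (τ z - τ (c s) - (τ z - τ x))) (𝓝[>] 0) (𝓝 (-a')) :=
      ha'.neg.congr fun s => by module
    refine tendsto_nhds_unique (tendsto_norm_slope_of_tangent h1)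
      ((tendsto_norm_slope_of_tangent h2).congr fun s => ?_)
    rw [hτ.isom _ _ hz (hc s), hτ.isom _ _ hz hx]
  · have h1 : Tendsto (fun s => s⁻¹ • (z + c s - (z + x))) (𝓝[>] 0) (𝓝 a) :=
      ha.congr fun s => by module
    have h2 : Tendsto (fun s => s⁻¹ • (τ z + τ (c s) - (τ z + τ x))) (𝓝[>] 0) (𝓝 a') :=
      ha'.congr fun s => by module
    refine tendsto_nhds_unique (tendsto_norm_slope_of_tangent h1)
      ((tendsto_norm_slope_of_tangent h2).congr fun s => ?_)
    rw [hτ.isom_add h2X hz (hc s), hτ.isom_add h2X hz hx]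

/-- The half-tangents `a`, `b` at a corner `x` and the half-tangents `a'`, `b'` at the corner
`τ x` correspond to each other. -/
structure IsCornerImage (τ : X → Y) (x a b : X) (k : ℝ) (a' b' : Y) : Prop where
  corner : HasNormCorner x a b k
  corner_image : HasNormCorner (τ x) a' b' k
  left : IsTangentImage τ x a a'
  right : IsTangentImage τ x b b'

lemma IsTangentImage.coeff_eq {τ : X → Y} {x a b : X} {a' b' : Y} {k α β : ℝ}
    (hx : ‖x‖ = 1) (hτx : ‖τ x‖ = 1) {c : ℝ → X} (hc : ∀ s, ‖c s‖ = 1)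
    (ha : Tendsto (fun s => s⁻¹ • (c s - x)) (𝓝[>] 0) (𝓝 a))
    (ha' : Tendsto (fun s => s⁻¹ • (τ (c s) - τ x)) (𝓝[>] 0) (𝓝 a'))
    (ha0 : normDirDeriv x a = 0) (ha0' : normDirDeriv (τ x) a' = 0)
    (hb : IsTangentImage τ x b b') (hab : a + b = (-k) • x) (hb' : b' = α • τ x + β • a') :
    α = -k := by
  have h1 := tendsto_normDirDeriv_along_tangent hx ha0 ha (-k) (-1)
  have h2 := tendsto_normDirDeriv_along_tangent hτx ha0' ha' α β
  refine tendsto_nhds_unique h2 (h1.congr fun s => ?_)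
  rw [← hb', ← hb.add _ (hc s), ← hab]
  congr 1
  module

/-- A sphere isometry maps corners to corners, and the half-tangents correspond. -/
theorem IsSphereIsometry.exists_cornerImage (h2X : Module.finrank ℝ X = 2)
    (h2Y : Module.finrank ℝ Y = 2) {τ : X → Y} (hτ : IsSphereIsometry τ) {x : X}
    (hx : ‖x‖ = 1) (hnd : ¬ DifferentiableAt ℝ (fun z : X => ‖z‖) x) :
    ∃ a b k a' b', IsCornerImage τ x a b k a' b' := by
  have : FiniteDimensional ℝ X := Module.finite_of_finrank_eq_succ h2X
  have hx0 : x ≠ 0 := by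
    rintro rfl
    simp at hx
  obtain ⟨v, hv⟩ := exists_linearIndependent_pair_of_one_lt_finrank (R := ℝ) (by omega) hx0
  have hv' := hv.pair_neg_right
  have hk : 0 < normDirDeriv x v + normDirDeriv x (-v) := by
    by_contra! hle
    exact hnd (differentiableAt_norm_of_normDirDeriv h2X hv hle)
  set k := normDirDeriv x v + normDirDeriv x (-v) with hk_def
  have hu := tendsto_sphereCurve_slope hx v
  have hw := tendsto_sphereCurve_slope hx (-v)
  set a := v - normDirDeriv x v • x with ha_def
  set b := -v - normDirDeriv x (-v) • x with hb_def
  have hab : a + b = (-k) • x := by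
    rw [ha_def, hb_def, hk_def]
    module
  have ne : ∀ w, LinearIndependent ℝ ![x, w] → ∀ s, 0 < s → sphereCurve x w s ≠ x := by
    intro w hw s hs h
    exact hs.ne' (sphereCurve_injective hw (h.trans (sphereCurve_zero hx w).symm))
  have ha0 := normDirDeriv_eq_zero_of_tangent hx (fun s _ => norm_sphereCurve hv s) hu
  have hb0 := normDirDeriv_eq_zero_of_tangent hx (fun s _ => norm_sphereCurve hv' s) hw
  have hli : LinearIndependent ℝ ![a, b] := by
    rw [LinearIndependent.pair_iff] at hv ⊢
    intro s t hst
    obtain ⟨h1, h2⟩ := hv (-(s * normDirDeriv x v) - t * normDirDeriv x (-v)) (s - t) (by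
      rw [← hst, ha_def, hb_def]
      module)
    obtain rfl : s = t := sub_eq_zero.1 h2
    have : s * k = 0 := by
      rw [hk_def]
      linarith
    have := (mul_eq_zero.1 this).resolve_right hk.ne'
    exact ⟨this, this⟩
  have hcorner : HasNormCorner x a b k := ⟨hx, hk, hli, hab, ha0, hb0⟩
  have hy := hτ.norm_map x hx
  obtain ⟨a', ha', haa⟩ := hτ.exists_tangentImage h2X h2Y hx (continuous_sphereCurve hv)
    (norm_sphereCurve hv) (ne v hv) hu
  obtain ⟨b', hb', hbb⟩ := hτ.exists_tangentImage h2X h2Y hx (continuous_sphereCurve hv')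
    (norm_sphereCurve hv') (ne (-v) hv') hw
  have ha0' := normDirDeriv_eq_zero_of_tangent hy
    (fun s _ => hτ.norm_map _ (norm_sphereCurve hv s)) ha'
  have hb0' := normDirDeriv_eq_zero_of_tangent hy
    (fun s _ => hτ.norm_map _ (norm_sphereCurve hv' s)) hb'
  have hane : a' ≠ 0 := by
    rw [← norm_ne_zero_iff, haa.norm_eq, norm_ne_zero_iff]
    exact hcorner.left_ne_zero
  have hbne : b' ≠ 0 := by
    rw [← norm_ne_zero_iff, hbb.norm_eq, norm_ne_zero_iff]
    exact hcorner.symm.left_ne_zero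
  have hya := linearIndependent_of_normDirDeriv_eq_zero hy hane ha0'
  have hyb := linearIndependent_of_normDirDeriv_eq_zero hy hbne hb0'
  obtain ⟨α, β, e1⟩ := exists_pair_coords h2Y hya b'
  obtain ⟨γ, δ, e2⟩ := exists_pair_coords h2Y hyb a'
  have h1 := hbb.coeff_eq hx hy (norm_sphereCurve hv) hu ha' ha0 ha0' hab e1
  have h2 := haa.coeff_eq hx hy (norm_sphereCurve hv') hw hb' hb0 hb0'
    (by rw [add_comm, hab]) e2
  subst h1 h2
  have hβ : β = -1 := by
    have := LinearIndependent.pair_iff.1 hyb (-k * (1 + β)) (β * δ - 1) (by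
      calc (-k * (1 + β)) • τ x + (β * δ - 1) • b'
          = ((-k) • τ x + β • ((-k) • τ x + δ • b')) - b' := by module
        _ = 0 := by rw [← e2, ← e1, sub_self])
    have h := (mul_eq_zero.1 this.1).resolve_left (neg_ne_zero.2 hk.ne')
    linarith
  subst hβ
  have hab' : a' + b' = (-k) • τ x := by
    rw [e1]
    module
  refine ⟨a, b, k, a', b', hcorner, ⟨hy, hk, ?_, hab', ha0', hb0'⟩, haa, hbb⟩
  rw [LinearIndependent.pair_iff] at hya ⊢
  intro s t hst
  obtain ⟨h3, h4⟩ := hya (-(t * k)) (s - t) (by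
    rw [← hst, e1]
    module)
  have : t = 0 := by simpa [hk.ne'] using h3
  subst this
  simpa using h4

end Corner

section CornerImage

variable {E X Y : Type*} [NormedAddCommGroup E] [NormedSpace ℝ E]
  [NormedAddCommGroup X] [NormedSpace ℝ X] [NormedAddCommGroup Y] [NormedSpace ℝ Y]

lemma finite_not_differentiableAt_sub {x : E} (hx : ‖x‖ = 1)
    (hfin : {u : E | ‖u‖ = 1 ∧ ¬ DifferentiableAt ℝ (fun z : E => ‖z‖) u}.Finite) :
    {z : E | ‖z‖ = 1 ∧ ‖z + x‖ ≠ 2 ∧ ¬ DifferentiableAt ℝ (fun z : E => ‖z‖) (z - x)}.Finite := by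
  have hne : ∀ z : E, ‖z + x‖ ≠ 2 → ‖z - x‖ ≠ 0 := by
    intro z hz h0
    rw [norm_sub_eq_zero_iff] at h0
    subst h0
    rw [← two_smul ℝ, norm_smul, hx] at hz
    simp at hz
  refine hfin.of_injOn (f := fun z => ‖z - x‖⁻¹ • (z - x)) ?_ ?_
  · refine fun z hz => ⟨?_, ?_⟩
    · rw [norm_smul, norm_inv, norm_norm, inv_mul_cancel₀ (hne z hz.2.1)]
    rw [← differentiableAt_norm_smul (inv_ne_zero (hne z hz.2.1))]
    exact hz.2.2
  · have key : ∀ z w : E, ‖z‖ = 1 → ‖w‖ = 1 → ‖z + x‖ ≠ 2 → ‖z - x‖ ≤ ‖w - x‖ →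
        ‖z - x‖⁻¹ • (z - x) = ‖w - x‖⁻¹ • (w - x) → z = w := by
      intro z w hz hw hzx hle h
      have hr := hne z hzx
      have hrpos : 0 < ‖z - x‖ := (norm_nonneg _).lt_of_ne' hr
      have hspos := hrpos.trans_le hle
      have hz' : z - x = (‖z - x‖ / ‖w - x‖) • (w - x) := by
        rw [div_eq_mul_inv, ← smul_smul, ← h, smul_inv_smul₀ hr]
      rcases hle.eq_or_lt with heq | hlt
      · rw [heq, div_self hspos.ne', one_smul] at hz'
        exact sub_left_injective hz'
      exfalso
      have hθ1 : ‖z - x‖ / ‖w - x‖ < 1 := (div_lt_one hspos).2 hlt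
      have hθ0 : 0 < ‖z - x‖ / ‖w - x‖ := div_pos hrpos hspos
      obtain ⟨g, hg, hgz⟩ := exists_dual_vector'' ℝ z
      have hgx := StrongDual.apply_le_norm hg x
      have hgw := StrongDual.apply_le_norm hg w
      have hgzx := StrongDual.apply_le_norm hg (z + x)
      have h1 := congrArg g hz'
      rw [map_smul, map_sub, map_sub, smul_eq_mul] at h1
      rw [map_add] at hgzx
      simp only [RCLike.ofReal_real_eq_id, id_eq] at hgz
      have h3 := norm_add_le z x
      rw [hz] at hgz h3
      rw [hx] at hgx h3
      rw [hw] at hgw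
      have hgx1 : g x = 1 := by nlinarith
      exact hzx (by linarith)
    intro z hz w hw h
    rcases le_total ‖z - x‖ ‖w - x‖ with hle | hle
    · exact key z w hz.1 hw.1 hz.2.1 hle h
    · exact (key w z hw.1 hz.1 hw.2.1 hle h.symm).symm

lemma finite_not_differentiableAt_add {x : E} (hx : ‖x‖ = 1)
    (hfin : {u : E | ‖u‖ = 1 ∧ ¬ DifferentiableAt ℝ (fun z : E => ‖z‖) u}.Finite) :
    {z : E | ‖z‖ = 1 ∧ ‖z - x‖ ≠ 2 ∧ ¬ DifferentiableAt ℝ (fun z : E => ‖z‖) (z + x)}.Finite := by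
  simpa [← sub_eq_add_neg] using finite_not_differentiableAt_sub (x := -x) (by simpa using hx) hfin

lemma differentiableAt_norm_of_norm_sub_add_norm_add (h2 : Module.finrank ℝ E = 2) {x z : E}
    (hx : ‖x‖ = 1) (hxz : ‖z - x‖ + ‖z + x‖ ≤ 2)
    (hd : DifferentiableAt ℝ (fun z : E => ‖z‖) (z + x)) :
    DifferentiableAt ℝ (fun z : E => ‖z‖) x := by
  have : FiniteDimensional ℝ E := Module.finite_of_finrank_eq_succ h2
  have hx0 : x ≠ 0 := by
    rintro rfl
    simp at hx
  obtain ⟨v, hv⟩ := exists_linearIndependent_pair_of_one_lt_finrank (R := ℝ) (by omega) hx0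
  obtain ⟨g, hg⟩ := hd
  have key : ∀ h, normDirDeriv x h ≤ g h := by
    intro h
    have h1 := (tendsto_norm_slope (z + x) ((2 : ℝ) • h)).div_const 2
    rw [normDirDeriv_smul _ _ two_pos.le, hg.normDirDeriv_eq,
      mul_div_cancel_left₀ _ (two_ne_zero' ℝ)] at h1
    refine ge_of_tendsto h1 ?_
    filter_upwards [self_mem_nhdsWithin] with t ht
    simp only [mem_Ioi] at ht
    refine (normDirDeriv_le x h ht).trans ?_
    have h2 := norm_sub_le (z + x + t • (2 : ℝ) • h) (z - x)
    rw [show z + x + t • (2 : ℝ) • h - (z - x) = (2 : ℝ) • (x + t • h) by module, norm_smul,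
      Real.norm_of_nonneg two_pos.le] at h2
    rw [div_right_comm]
    gcongr
    linarith
  refine differentiableAt_norm_of_normDirDeriv h2 hv ?_
  have h1 := key v
  have h3 := key (-v)
  rw [map_neg] at h3
  linarith

lemma norm_sub_add_norm_add_le_two (h2 : Module.finrank ℝ E = 2) {x z κ : E} {f g : StrongDual ℝ E}
    (hx : ‖x‖ = 1) (hz : ‖z‖ = 1) (hf : HasFDerivAt (‖·‖) f (z - x))
    (hg : HasFDerivAt (‖·‖) g (z + x)) (hκ : κ ≠ 0) (hfκ : f κ = 0) (hgκ : g κ = 0) :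
    ‖z - x‖ + ‖z + x‖ ≤ 2 := by
  have : FiniteDimensional ℝ E := Module.finite_of_finrank_eq_succ h2
  obtain ⟨q, hq⟩ := exists_linearIndependent_pair_of_one_lt_finrank (R := ℝ) (by omega) hκ
  have two_norm : ∀ u : E, ‖u‖ = 1 → ‖u + u‖ = 2 := by
    intro u hu
    rw [← two_smul ℝ, norm_smul, hu]
    simp
  by_cases hD : z - x = 0
  · obtain rfl := sub_eq_zero.1 hD
    simp [two_norm z hz]
  by_cases hE : z + x = 0
  · obtain rfl := eq_neg_of_add_eq_zero_left hE
    rw [← neg_add', norm_neg, two_norm x hx]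
    simp
  have le_of : ∀ (P : E) (f g : StrongDual ℝ E), P ≠ 0 → f κ = 0 → g κ = 0 → f P = ‖P‖ →
      |g P| ≤ ‖P‖ → |g q| ≤ |f q| := by
    intro P f g hP hf hg hfP hgP
    obtain ⟨s, t, hst⟩ := exists_pair_coords h2 hq P
    have hP' := norm_pos_iff.2 hP
    rw [← abs_of_pos hP', ← hfP, hst] at hgP
    rw [hst] at hfP
    simp only [map_add, map_smul, hf, hg, smul_eq_mul, mul_zero, zero_add, abs_mul] at hgP hfP
    have ht : t ≠ 0 := by
      rintro rfl
      simp only [zero_mul] at hfP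
      rw [hst, ← hfP] at hP'
      exact lt_irrefl _ hP'
    exact le_of_mul_le_mul_left hgP (abs_pos.2 ht)
  have habs := le_antisymm
    (le_of _ g f hE hgκ hfκ hg.norm_apply_self (hf.norm_apply_le (z + x)))
    (le_of _ f g hD hfκ hgκ hf.norm_apply_self (hg.norm_apply_le (z - x)))
  have hfD := hf.norm_apply_self
  have hgE := hg.norm_apply_self
  rcases abs_eq_abs.1 habs with h | h
  · have hfg : ∀ v, f v = g v := by
      intro v
      obtain ⟨s, t, rfl⟩ := exists_pair_coords h2 hq v
      simp [hfκ, hgκ, h]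
    have := (le_abs_self _).trans (hg.norm_apply_le z)
    rw [hfg, map_sub] at hfD
    rw [map_add] at hgE
    linarith
  · have hfg : ∀ v, f v = -g v := by
      intro v
      obtain ⟨s, t, rfl⟩ := exists_pair_coords h2 hq v
      simp [hfκ, hgκ, h]
    have := (le_abs_self _).trans (hg.norm_apply_le x)
    rw [hfg, map_sub] at hfD
    rw [map_add] at hgE
    linarith

lemma differentiableAt_norm_add_of_norm_add_eq_two (h2 : Module.finrank ℝ E = 2) {x z : E}
    (hx : ‖x‖ = 1) (hz : ‖z‖ = 1) (hne : z ≠ x) (hxz : ‖z + x‖ = 2) :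
    DifferentiableAt ℝ (fun z : E => ‖z‖) (z + x) := by
  obtain ⟨f, hf, hfz⟩ := exists_dual_vector'' ℝ (z + x)
  rw [hxz] at hfz
  obtain ⟨h1, h3⟩ := apply_eq_one_of_add hf hz hx hfz
  have hli := linearIndependent_of_apply_eq_one h1 h3 hne
  refine differentiableAt_norm_of_normDirDeriv h2 (w := z - x) ?_ ?_
  · rw [LinearIndependent.pair_iff] at hli ⊢
    intro s t hst
    obtain ⟨h4, h5⟩ := hli (s + t) (s - t) (by rw [← hst]; module)
    constructor <;> linarith
  · have h4 := normDirDeriv_le (z + x) (z - x) one_pos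
    have h5 := normDirDeriv_le (z + x) (-(z - x)) one_pos
    rw [show z + x + (1 : ℝ) • (z - x) = (2 : ℝ) • z by module, norm_smul, hz, hxz] at h4
    rw [show z + x + (1 : ℝ) • (-(z - x)) = (2 : ℝ) • x by module, norm_smul, hx, hxz] at h5
    rw [Real.norm_of_nonneg two_pos.le] at h4 h5
    linarith

lemma normDirDeriv_sub_eq_zero_of_norm_add_eq_two {x z : E} (hx : ‖x‖ = 1) (hz : ‖z‖ = 1)
    (hxz : ‖z + x‖ = 2) : normDirDeriv x (z - x) = 0 := by
  obtain ⟨f, hf, hfz⟩ := exists_dual_vector'' ℝ (z + x)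
  rw [hxz] at hfz
  obtain ⟨h1, h3⟩ := apply_eq_one_of_add hf hz hx hfz
  refine le_antisymm ?_ (ge_of_tendsto (tendsto_norm_slope x (z - x)) ?_)
  · have := normDirDeriv_le x (z - x) one_pos
    simpa [hx, hz] using this
  · filter_upwards [self_mem_nhdsWithin] with t ht
    refine div_nonneg ?_ (le_of_lt ht)
    have := StrongDual.apply_le_norm hf (x + t • (z - x))
    rw [map_add, map_smul, map_sub, h1, h3, sub_self, smul_zero, add_zero] at this
    rw [hx]
    linarith

namespace IsCornerImage

variable {τ : X → Y} {x a b : X} {k : ℝ} {a' b' : Y} {T : X →ₗ[ℝ] Y}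

lemma symm (h : IsCornerImage τ x a b k a' b') : IsCornerImage τ x b a k b' a' :=
  ⟨h.corner.symm, h.corner_image.symm, h.right, h.left⟩

lemma map_eq (h : IsCornerImage τ x a b k a' b') (ha : T a = a') (hb : T b = b') : T x = τ x := by
  calc T x = (-k)⁻¹ • (T a + T b) := by rw [← map_add, ← map_smul, ← h.corner.smul_eq]
    _ = τ x := by rw [ha, hb, ← h.corner_image.smul_eq]

lemma eq_comp_of_hasFDerivAt_sub (h2 : Module.finrank ℝ X = 2)
    (h : IsCornerImage τ x a b k a' b') (ha : T a = a') (hb : T b = b') {z : X} (hz : ‖z‖ = 1)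
    {f : StrongDual ℝ X} {f' : StrongDual ℝ Y} (hf : HasFDerivAt (‖·‖) f (z - x))
    (hf' : HasFDerivAt (‖·‖) f' (τ z - τ x)) (v : X) : f v = f' (T v) := by
  have h1 := h.left.sub z hz
  have h3 := h.right.sub z hz
  rw [hf.normDirDeriv_eq, hf'.normDirDeriv_eq, map_neg, map_neg, neg_inj] at h1 h3
  obtain ⟨s, t, rfl⟩ := exists_pair_coords h2 h.corner.linearIndependent v
  simp [ha, hb, h1, h3]

lemma eq_comp_of_hasFDerivAt_add (h2 : Module.finrank ℝ X = 2)
    (h : IsCornerImage τ x a b k a' b') (ha : T a = a') (hb : T b = b') {z : X} (hz : ‖z‖ = 1)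
    {g : StrongDual ℝ X} {g' : StrongDual ℝ Y} (hg : HasFDerivAt (‖·‖) g (z + x))
    (hg' : HasFDerivAt (‖·‖) g' (τ z + τ x)) (v : X) : g v = g' (T v) := by
  have h1 := h.left.add z hz
  have h3 := h.right.add z hz
  rw [hg.normDirDeriv_eq, hg'.normDirDeriv_eq] at h1 h3
  obtain ⟨s, t, rfl⟩ := exists_pair_coords h2 h.corner.linearIndependent v
  simp [ha, hb, h1, h3]

lemma map_eq_of_differentiableAt (h2X : Module.finrank ℝ X = 2) (h2Y : Module.finrank ℝ Y = 2)
    (hτ : IsSphereIsometry τ) (h : IsCornerImage τ x a b k a' b') (ha : T a = a') (hb : T b = b')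
    {z : X} (hz : ‖z‖ = 1) (hd : DifferentiableAt ℝ (fun z : X => ‖z‖) (z - x))
    (hs : DifferentiableAt ℝ (fun z : X => ‖z‖) (z + x))
    (hd' : DifferentiableAt ℝ (fun z : Y => ‖z‖) (τ z - τ x))
    (hs' : DifferentiableAt ℝ (fun z : Y => ‖z‖) (τ z + τ x)) : T z = τ z := by
  have hx := h.corner.norm_eq
  have hnd := h.corner.not_differentiableAt
  have hTx := h.map_eq ha hb
  obtain ⟨f, hf⟩ := hd
  obtain ⟨g, hg⟩ := id hs
  obtain ⟨f', hf'⟩ := hd'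
  obtain ⟨g', hg'⟩ := hs'
  have hff := h.eq_comp_of_hasFDerivAt_sub h2X ha hb hz hf hf'
  have hgg := h.eq_comp_of_hasFDerivAt_add h2X ha hb hz hg hg'
  obtain ⟨s, t, hst⟩ := exists_pair_coords h2Y h.corner_image.linearIndependent (τ z)
  obtain ⟨w, hw⟩ : ∃ w, T w = τ z := ⟨s • a + t • b, by rw [hst]; simp [ha, hb]⟩
  by_contra hne
  have hκ : w - z ≠ 0 := by
    intro h0
    rw [sub_eq_zero.1 h0] at hw
    exact hne hw
  have hfκ : f (w - z) = 0 := by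
    have h1 := hf'.norm_apply_self
    rw [hτ.isom _ _ hz hx, ← hf.norm_apply_self, ← hw, ← hTx, ← map_sub T, ← hff, map_sub,
      map_sub] at h1
    rw [map_sub]
    linarith
  have hgκ : g (w - z) = 0 := by
    have h1 := hg'.norm_apply_self
    rw [hτ.isom_add h2X hz hx, ← hg.norm_apply_self, ← hw, ← hTx, ← map_add T, ← hgg, map_add,
      map_add] at h1
    rw [map_sub]
    linarith
  exact hnd (differentiableAt_norm_of_norm_sub_add_norm_add h2X hx
    (norm_sub_add_norm_add_le_two h2X hx hz hf hg hκ hfκ hgκ) hs)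

lemma map_eq_of_norm_ne_two (h2X : Module.finrank ℝ X = 2) (h2Y : Module.finrank ℝ Y = 2)
    (hτ : IsSphereIsometry τ) (h : IsCornerImage τ x a b k a' b') (ha : T a = a') (hb : T b = b')
    (hX : {u : X | ‖u‖ = 1 ∧ ¬ DifferentiableAt ℝ (fun z : X => ‖z‖) u}.Finite)
    (hY : {u : Y | ‖u‖ = 1 ∧ ¬ DifferentiableAt ℝ (fun z : Y => ‖z‖) u}.Finite)
    {z : X} (hz : ‖z‖ = 1) (hs : ‖z + x‖ ≠ 2) (hd : ‖z - x‖ ≠ 2) : T z = τ z := by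
  have : FiniteDimensional ℝ X := Module.finite_of_finrank_eq_succ h2X
  have hx := h.corner.norm_eq
  have hy := h.corner_image.norm_eq
  have hinj : InjOn τ {u | ‖u‖ = 1} := fun u hu v hv huv => hτ.injOn hu hv huv
  have hbad := ((finite_not_differentiableAt_sub hx hX).union
    (finite_not_differentiableAt_add hx hX)).union
    (((finite_not_differentiableAt_sub hy hY).union
    (finite_not_differentiableAt_add hy hY)).of_injOn
      (f := τ) (s := {u | ‖u‖ = 1} ∩ τ ⁻¹' _) (fun u hu => hu.2) (hinj.mono inter_subset_left))
  by_contra hne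
  have hz0 : z ≠ 0 := by
    rintro rfl
    simp at hz
  obtain ⟨v, hv⟩ := exists_linearIndependent_pair_of_one_lt_finrank (R := ℝ) (by omega) hz0
  set c := sphereCurve z v
  have hc1 : ∀ s, ‖c s‖ = 1 := norm_sphereCurve hv
  have hc : Continuous c := continuous_sphereCurve hv
  have hτc := hτ.continuous_comp hc hc1
  have hTc : Continuous fun s => T (c s) := T.continuous_of_finiteDimensional.comp hc
  have hc0 : c 0 = z := sphereCurve_zero hz v
  refine infinite_of_mem_nhds (0 : ℝ) ?_
    (hbad.preimage (sphereCurve_injective hv).injOn)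
  have e1 : ∀ᶠ s in 𝓝 (0 : ℝ), T (c s) ≠ τ (c s) :=
    (isOpen_ne_fun hTc hτc).mem_nhds (by simpa [hc0] using hne)
  have e2 : ∀ᶠ s in 𝓝 (0 : ℝ), ‖c s + x‖ ≠ 2 :=
    (isOpen_ne_fun (hc.add continuous_const).norm continuous_const).mem_nhds
      (by simpa [hc0] using hs)
  have e3 : ∀ᶠ s in 𝓝 (0 : ℝ), ‖c s - x‖ ≠ 2 :=
    (isOpen_ne_fun (hc.sub continuous_const).norm continuous_const).mem_nhds
      (by simpa [hc0] using hd)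
  filter_upwards [e1, e2, e3] with s h1 h2 h3
  by_contra hcon
  have h2' := h2
  have h3' := h3
  rw [← hτ.isom_add h2X (hc1 s) hx] at h2'
  rw [← hτ.isom _ _ (hc1 s) hx] at h3'
  have hn := hτ.norm_map _ (hc1 s)
  simp only [mem_preimage, mem_union, mem_inter_iff, mem_ofPred_eq, not_or, not_and,
    not_not] at hcon
  obtain ⟨⟨c1, c2⟩, c3⟩ := hcon
  obtain ⟨c3, c4⟩ := c3 (hc1 s)
  exact h1 (h.map_eq_of_differentiableAt h2X h2Y hτ ha hb (hc1 s) (c1 (hc1 s) h2) (c2 (hc1 s) h3)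
    (c3 hn h2') (c4 hn h3'))

lemma map_eq_of_norm_add_eq_two (h2X : Module.finrank ℝ X = 2) (h2Y : Module.finrank ℝ Y = 2)
    (hτ : IsSphereIsometry τ) (h : IsCornerImage τ x a b k a' b') (ha : T a = a') (hb : T b = b')
    {z : X} (hz : ‖z‖ = 1) (hs : ‖z + x‖ = 2) : T z = τ z := by
  have hx := h.corner.norm_eq
  have hy := h.corner_image.norm_eq
  have hw := hτ.norm_map z hz
  have hTx := h.map_eq ha hb
  by_cases hzx : z = x
  · rw [hzx, hTx]
  have hs' := hs
  rw [← hτ.isom_add h2X hz hx] at hs'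
  have hwy : τ z ≠ τ x := fun h => hzx (hτ.injOn hz hx h)
  have matched : ∀ {a b : X} {a' b' : Y}, IsCornerImage τ x a b k a' b' → T a = a' →
      ∀ {β β' : ℝ}, 0 ≤ β → 0 ≤ β' → z - x = β • a → τ z - τ x = β' • a' → T z = τ z := by
    intro a b a' b' h ha β β' hβ hβ' h1 h3
    have h4 := hτ.isom z x hz hx
    rw [h1, h3, norm_smul, norm_smul, h.left.norm_eq, Real.norm_of_nonneg hβ,
      Real.norm_of_nonneg hβ'] at h4
    have h5 := mul_right_cancel₀ (norm_ne_zero_iff.2 h.corner.left_ne_zero) h4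
    have h6 : T (z - x) = τ z - τ x := by rw [h1, h3, map_smul, ha, h5]
    rwa [map_sub, hTx, sub_left_inj] at h6
  obtain ⟨g, hg⟩ := differentiableAt_norm_add_of_norm_add_eq_two h2X hx hz hzx hs
  obtain ⟨g', hg'⟩ := differentiableAt_norm_add_of_norm_add_eq_two h2Y hy hw hwy hs'
  have hgg := h.eq_comp_of_hasFDerivAt_add h2X ha hb hz hg hg'
  have hgn := hg.norm_apply_self
  have hgn' := hg'.norm_apply_self
  rw [hs, map_add] at hgn
  rw [hs', map_add] at hgn'
  have g1 := (le_abs_self _).trans (hg.norm_apply_le z)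
  have g2 := (le_abs_self _).trans (hg.norm_apply_le x)
  have g3 := (le_abs_self _).trans (hg'.norm_apply_le (τ z))
  have g4 := (le_abs_self _).trans (hg'.norm_apply_le (τ x))
  have crossed : ∀ {a b : X} {a' b' : Y}, IsCornerImage τ x a b k a' b' → T a = a' →
      ∀ {β β' : ℝ}, z - x = β • a → τ z - τ x = β' • b' → False := by
    intro a b a' b' h ha β β' h1 h3
    have hβ : β ≠ 0 := by
      rintro rfl
      rw [zero_smul] at h1
      exact hzx (sub_eq_zero.1 h1)
    have hβ' : β' ≠ 0 := by
      rintro rfl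
      rw [zero_smul] at h3
      exact hwy (sub_eq_zero.1 h3)
    have h4 := congrArg g h1
    have h5 := congrArg g' h3
    rw [map_sub, map_smul, smul_eq_mul] at h4 h5
    have ga : g a = 0 := (mul_eq_zero.1 (h4.symm.trans (by linarith))).resolve_left hβ
    have gb : g' b' = 0 := (mul_eq_zero.1 (h5.symm.trans (by linarith))).resolve_left hβ'
    rw [hgg, ha] at ga
    have h6 := congrArg g' h.corner_image.smul_eq
    rw [map_smul, map_add, ga, gb, add_zero, smul_zero] at h6
    linarith
  obtain ⟨β, hβ, h1⟩ := h.corner.exists_eq_smul h2X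
    (normDirDeriv_sub_eq_zero_of_norm_add_eq_two hx hz hs)
  obtain ⟨β', hβ', h3⟩ := h.corner_image.exists_eq_smul h2Y
    (normDirDeriv_sub_eq_zero_of_norm_add_eq_two hy hw hs')
  rcases h1 with h1 | h1 <;> rcases h3 with h3 | h3
  · exact matched h ha hβ hβ' h1 h3
  · exact (crossed h ha h1 h3).elim
  · exact (crossed h.symm hb h1 h3).elim
  · exact matched h.symm hb hβ hβ' h1 h3

end IsCornerImage

/-- A surjective isometry between the unit spheres of two planes is linear if the norm of the
first plane is not differentiable at some unit vector and is differentiable at all but finitely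
many unit vectors. -/
theorem IsSphereIsometry.exists_linearIsometryEquiv (h2X : Module.finrank ℝ X = 2)
    (h2Y : Module.finrank ℝ Y = 2) {τ : X → Y} (hτ : IsSphereIsometry τ)
    (hX : {u : X | ‖u‖ = 1 ∧ ¬ DifferentiableAt ℝ (fun z : X => ‖z‖) u}.Finite)
    {x : X} (hx : ‖x‖ = 1) (hnd : ¬ DifferentiableAt ℝ (fun z : X => ‖z‖) x) :
    ∃ T : X ≃ₗᵢ[ℝ] Y, ∀ u : X, ‖u‖ = 1 → T u = τ u := by
  have : FiniteDimensional ℝ X := Module.finite_of_finrank_eq_succ h2X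
  have : FiniteDimensional ℝ Y := Module.finite_of_finrank_eq_succ h2Y
  obtain ⟨ι, hι, -, hr⟩ := hτ.exists_inverse
  have hY : {u : Y | ‖u‖ = 1 ∧ ¬ DifferentiableAt ℝ (fun z : Y => ‖z‖) u}.Finite := by
    refine (hX.image τ).subset fun w hw => ⟨ι w, ⟨hι.norm_map w hw.1, ?_⟩, hr w hw.1⟩
    obtain ⟨_, _, _, _, _, h⟩ := hι.exists_cornerImage h2Y h2X hw.1 hw.2
    exact h.corner_image.not_differentiableAt
  obtain ⟨a, b, k, a', b', h⟩ := hτ.exists_cornerImage h2X h2Y hx hnd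
  obtain ⟨T, ha, hb⟩ := exists_linearMap_pair h2X h.corner.linearIndependent a' b'
  have hT : ∀ z, ‖z‖ = 1 → T z = τ z := by
    intro z hz
    by_cases hs : ‖z + x‖ = 2
    · exact h.map_eq_of_norm_add_eq_two h2X h2Y hτ ha hb hz hs
    by_cases hd : ‖z - x‖ = 2
    · have := h.map_eq_of_norm_add_eq_two h2X h2Y hτ ha hb (z := -z) (by rwa [norm_neg])
        (by rwa [neg_add_eq_sub, norm_sub_rev])
      rwa [_root_.map_neg T, hτ.map_neg h2X hz, neg_inj] at this
    · exact h.map_eq_of_norm_ne_two h2X h2Y hτ ha hb hX hY hz hs hd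
  have hnorm : ∀ v, ‖T v‖ = ‖v‖ := by
    intro v
    by_cases hv : v = 0
    · simp [hv]
    have hv' := norm_ne_zero_iff.2 hv
    have h1 : ‖‖v‖⁻¹ • v‖ = 1 := by rw [norm_smul, norm_inv, norm_norm, inv_mul_cancel₀ hv']
    have h3 := hτ.norm_map _ h1
    rw [← hT _ h1, map_smul, norm_smul, norm_inv, norm_norm] at h3
    field_simp at h3
    exact h3
  exact ⟨LinearIsometry.toLinearIsometryEquiv ⟨T, hnorm⟩ (by rw [h2X, h2Y]), hT⟩

end CornerImage

/-- Theorem `Piece`. Let `X` be a two-dimensional real normed space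
whose unit sphere is piecewise `C¹`-differentiable (the set of unit vectors where the
norm is not differentiable is finite) and contains two linearly independent points
`x, x̄` of non-differentiability of the norm. Then for any two-dimensional normed space
`Y`, every surjective isometry `τ : S_X → S_Y` is the restriction of a surjective linear
isometry `X → Y`. -/
theorem stmt8 {X Y : Type*} [NormedAddCommGroup X] [NormedSpace ℝ X]
    [NormedAddCommGroup Y] [NormedSpace ℝ Y]
    (hdimX : Module.finrank ℝ X = 2) (hdimY : Module.finrank ℝ Y = 2)
    (hpiece : {u : X | ‖u‖ = 1 ∧ ¬ DifferentiableAt ℝ (fun z : X => ‖z‖) u}.Finite)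
    (x xbar : X) (hx : ‖x‖ = 1) (hxbar : ‖xbar‖ = 1)
    (hndx : ¬ DifferentiableAt ℝ (fun z : X => ‖z‖) x)
    (hndxbar : ¬ DifferentiableAt ℝ (fun z : X => ‖z‖) xbar)
    (hindep : LinearIndependent ℝ ![x, xbar])
    (τ : X → Y)
    (hmap : ∀ u : X, ‖u‖ = 1 → ‖τ u‖ = 1)
    (hsurj : ∀ w : Y, ‖w‖ = 1 → ∃ u : X, ‖u‖ = 1 ∧ τ u = w)
    (hiso : ∀ u v : X, ‖u‖ = 1 → ‖v‖ = 1 → ‖τ u - τ v‖ = ‖u - v‖) :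
    ∃ T : X ≃ₗᵢ[ℝ] Y, ∀ u : X, ‖u‖ = 1 → T u = τ u := by
  exact IsSphereIsometry.exists_linearIsometryEquiv hdimX hdimY ⟨hmap, hsurj, hiso⟩ hpiece hx hndx
end
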